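/- Let n ≥ 1, T, M > 0, and let Ω ⊂ ℝⁿ be open, bounded and convex. Let A : ℝⁿ → ℝ^{n×n} be smooth with each A(p) symmetric and positive semidefinite, let b : ℝⁿ × [0,T] → ℝ be continuous, define α(p) = |p|² · inf{ (vᵀA(p)v)/(v·p)² : v ∈ ℝⁿ, v·p ≠ 0 }, and suppose there is α̃ : (0,∞) → (0,∞) with α(p) = α̃(|p|) for all p ≠ 0. Let u : closure(Ω) × [0,T] → ℝ be continuous, smooth on closure(Ω) × (0,T] (meaning u_t, Du and D²u exist on Ω × (0,T] and extend continuously to closure(Ω) × (0,T]), satisfy u_t = Σ_{i,j} A(Du)_{ij}·D_{ij}u + b(Du,t) on Ω × (0,T], satisfy the Neumann condition that for every boundary point x of Ω, every t ∈ (0,T], and every ν ∈ ℝⁿ with ⟨ν, y−x⟩ ≤ 0 for all y ∈ Ω one has ⟨Du(x,t), ν⟩ = 0, and have osc_{closure(Ω)} u(·,0) ≤ M. Let φ : [0,∞) × (0,∞) → ℝ be continuous, with continuous partial derivatives φ_t, φ_z, φ_{zz} and with φ_z > 0 on (0,∞) × (0,∞), satisfying φ_t = 4·α̃(|φ_z|)·φ_{zz}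 there and the barrier boundary conditions. Then for all x, y ∈ closure(Ω) and all t ∈ (0,T]: |u(y,t) − u(x,t)| ≤ M · φ(|y−x|/M, t/M²). -/

import Mathlib

/-!
The maximum principle is applied to the two-point function
`Z(x, y, t) = u(y, t) - u(x, t) - Φ(|y - x|, t)`, where `Φ(z, t) = M φ(z / M, t / M²)`. At an
interior maximum with `x ≠ y` both gradients equal `Φ_z e` with `e = (y - x) / |y - x|`. Moving `x`
and `y` by the same vector shows that `S = D²u(y) - D²u(x)` is negative semidefinite, and moving
them in opposite directions along `e` shows that `⟪S e, e⟫ ≤ 4 Φ_zz`. The definition of `α` says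
that `A(Φ_z e) ≥ α̃(Φ_z) e ⊗ e`, so `tr (A S) ≤ α̃ ⟪S e, e⟫ ≤ 4 α̃ Φ_zz = Φ_t`. Hence
`Z - ε t` cannot have a maximum of this kind at a positive time.

A maximum at the boundary is ruled out by also subtracting `δ (|y - x₀|² + |x - x₀|²)` with
`x₀ ∈ Ω`, which makes the Neumann condition strict. The two gradients, and hence the coefficients
of the equation, then differ at `x` and `y`; instead of estimating the resulting error, the
conditions at the maximum, which are closed, are passed to the limit `δ → 0`.
-/

open Set Filter Topology InnerProductSpace
open scoped RealInnerProductSpace Matrix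

/-! ### Differentiability from continuous partial derivatives -/

section Partials

variable {E F G₁ G₂ ι : Type*} [NormedAddCommGroup E] [NormedSpace ℝ E] [NormedAddCommGroup F]
  [NormedSpace ℝ F] [NormedAddCommGroup G₁] [NormedSpace ℝ G₁] [NormedAddCommGroup G₂]
  [NormedSpace ℝ G₂] {Ω : Set E} {f : E → F} {f' : E → E →L[ℝ] F}

/-- `f` is differentiable on `Ω` along every translate of the range of `L`, with derivative the
restriction of `f'` to that range. Partial differentiability and Fréchet differentiability are the
cases where `L` spans a coordinate axis and where `L` is the identity. -/
def HasFDerivAlong (f : E → F) (f' : E → E →L[ℝ] F) (Ω : Set E) (L : G₁ →L[ℝ] E) : Prop :=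
  ∀ x w, x + L w ∈ Ω → HasFDerivAt (fun z => f (x + L z)) (f' (x + L w) ∘L L) w

theorem HasFDerivAlong.comp {L : G₁ →L[ℝ] E} (h : HasFDerivAlong f f' Ω L) (K : G₂ →L[ℝ] G₁) :
    HasFDerivAlong f f' Ω (L ∘L K) := fun x w hw =>
  (h x (K w) hw).comp w K.hasFDerivAt

theorem HasFDerivAlong.coprod (hΩ : IsOpen Ω) (hf' : ContinuousOn f' Ω)
    {L₁ : G₁ →L[ℝ] E} {L₂ : G₂ →L[ℝ] E} (h₁ : HasFDerivAlong f f' Ω L₁)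
    (h₂ : HasFDerivAlong f f' Ω L₂) : HasFDerivAlong f f' Ω (L₁.coprod L₂) := by
  intro x w hw
  have base_cont : Continuous fun z : G₁ × G₂ => x + L₁.coprod L₂ z := by fun_prop
  have base_mem : ∀ᶠ z in 𝓝 w, x + L₁.coprod L₂ z ∈ Ω :=
    base_cont.continuousAt.eventually (hΩ.mem_nhds hw)
  have f'_cont : ContinuousAt (fun z => f' (x + L₁.coprod L₂ z)) w :=
    (hf'.continuousAt (hΩ.mem_nhds hw)).comp (f := fun z => x + L₁.coprod L₂ z)
      base_cont.continuousAt
  have h := hasStrictFDerivAt_uncurry_coprod (u := w)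
    (f := fun z₁ z₂ => f (x + L₁.coprod L₂ (z₁, z₂)))
    (f₁ := fun z₁ z₂ => f' (x + L₁.coprod L₂ (z₁, z₂)) ∘L L₁)
    (f₂ := fun z₁ z₂ => f' (x + L₁.coprod L₂ (z₁, z₂)) ∘L L₂) ?_ ?_
    (f'_cont.clm_comp continuousAt_const) (f'_cont.clm_comp continuousAt_const)
  · exact h.hasFDerivAt.congr_fderiv (ContinuousLinearMap.comp_coprod ..).symm
  · filter_upwards [base_mem] with z hz
    simpa [add_assoc, add_comm (L₂ z.2), Function.HasUncurry.uncurry] using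
      h₁ (x + L₂ z.2) z.1 (by simpa [add_assoc, add_comm (L₂ z.2)] using hz)
  · filter_upwards [base_mem] with z hz
    simpa [add_assoc, Function.HasUncurry.uncurry] using
      h₂ (x + L₁ z.1) z.2 (by simpa [add_assoc] using hz)

theorem HasFDerivAlong.sum (hΩ : IsOpen Ω) (hf' : ContinuousOn f' Ω) (s : Finset ι)
    {L : ι → G₁ →L[ℝ] E} (h : ∀ i, HasFDerivAlong f f' Ω (L i)) :
    HasFDerivAlong f f' Ω (∑ i ∈ s, L i) := by
  classical
  induction s using Finset.induction_on with
  | empty =>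
    intro x w _
    simpa using hasFDerivAt_const (f x) w
  | insert i s hi ih =>
    convert ((h i).coprod hΩ hf' ih).comp ((ContinuousLinearMap.id ℝ G₁).prod (.id ℝ G₁)) using 1
    ext w
    simp [Finset.sum_insert hi]

theorem HasFDerivAlong.of_hasLineDerivAt {v : E}
    (h : ∀ x ∈ Ω, HasLineDerivAt ℝ f (f' x v) x v) :
    HasFDerivAlong f f' Ω (ContinuousLinearMap.toSpanSingleton ℝ v) := by
  intro x w hw
  have shifted : HasDerivAt (fun z => f (x + w • v + (z - w) • v)) (f' (x + w • v) v) w :=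
    HasDerivAt.comp_sub_const w w (by simpa [HasLineDerivAt] using h _ hw)
  have line_eq (z : ℝ) : x + w • v + (z - w) • v = x + z • v := by module
  simp only [line_eq] at shifted
  exact shifted.hasFDerivAt.congr_fderiv (ContinuousLinearMap.comp_toSpanSingleton ..).symm

theorem hasFDerivAt_of_hasLineDerivAt_basis [Finite ι] (e : Module.Basis ι ℝ E) (hΩ : IsOpen Ω)
    (hf' : ContinuousOn f' Ω) (h : ∀ x ∈ Ω, ∀ i, HasLineDerivAt ℝ f (f' x (e i)) x (e i))
    {x : E} (hx : x ∈ Ω) : HasFDerivAt f (f' x) x := by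
  cases nonempty_fintype ι
  have := e.finiteDimensional_of_finite
  have along (i : ι) : HasFDerivAlong f f' Ω ((e.coord i).toContinuousLinearMap.smulRight (e i)) :=
    (HasFDerivAlong.of_hasLineDerivAt fun x hx => h x hx i).comp
      (e.coord i).toContinuousLinearMap
  have id_eq : ∑ i, (e.coord i).toContinuousLinearMap.smulRight (e i) = .id ℝ E := by
    ext v
    simp [e.sum_repr]
  have := HasFDerivAlong.sum hΩ hf' Finset.univ along 0 x
  simpa [id_eq, hx] using this

theorem hasFDerivWithinAt_closure_of_continuousOn (hΩ : IsOpen Ω) (hconv : Convex ℝ Ω)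
    (hf : ContinuousOn f (closure Ω)) (hf' : ContinuousOn f' (closure Ω))
    (h : ∀ x ∈ Ω, HasFDerivAt f (f' x) x) {x : E} (hx : x ∈ closure Ω) :
    HasFDerivWithinAt f (f' x) (closure Ω) x := by
  refine hasFDerivWithinAt_closure_of_tendsto_fderiv
    (fun z hz => (h z hz).differentiableAt.differentiableWithinAt) hconv hΩ
    (fun z hz => (hf z hz).mono subset_closure) ?_
  exact ((hf' x hx).mono subset_closure).congr' <|
    eventually_nhdsWithin_of_forall fun z hz => (h z hz).fderiv.symm

end Partials

section DerivativesAlongLines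

theorem secondDeriv_nonpos_of_isLocalMax {f f' : ℝ → ℝ} {f'' a : ℝ} (hmax : IsLocalMax f a)
    (hf : ∀ᶠ s in 𝓝 a, HasDerivAt f (f' s) s) (hf' : HasDerivAt f' f'' a) : f'' ≤ 0 := by
  by_contra! hpos
  have deriv_eq : deriv f =ᶠ[𝓝 a] f' := hf.mono fun s hs => hs.deriv
  have deriv_deriv : deriv (deriv f) a = f'' := by rw [deriv_eq.deriv_eq, hf'.deriv]
  have hmin : IsLocalMin f a := isLocalMin_of_deriv_deriv_pos (deriv_deriv ▸ hpos)
    hmax.deriv_eq_zero hf.self_of_nhds.continuousAt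
  have const : f =ᶠ[𝓝 a] fun _ => f a := hmax.and hmin |>.mono fun s hs => le_antisymm hs.1 hs.2
  have deriv_zero : deriv f =ᶠ[𝓝 a] fun _ => 0 := by simpa using const.deriv
  exact hpos.ne' (by simpa [deriv_deriv] using deriv_zero.deriv_eq)

theorem derivWithin_Icc_nonneg_of_isMaxOn_right {f : ℝ → ℝ} {f' a b : ℝ} (hab : a < b)
    (hf : HasDerivWithinAt f f' (Icc a b) b) (hmax : IsMaxOn f (Icc a b) b) : 0 ≤ f' := by
  have cone : a - b ∈ posTangentConeAt (Icc a b) b := sub_mem_posTangentConeAt_of_segment_subset <|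
    (convex_Icc a b).segment_subset (right_mem_Icc.2 hab.le) (left_mem_Icc.2 hab.le)
  have h : (a - b) * f' ≤ 0 := by
    simpa using hmax.localize.hasFDerivWithinAt_nonpos hf.hasFDerivWithinAt cone
  exact nonneg_of_mul_nonpos_right h (sub_neg.2 hab)

theorem hasDerivAt_comp_add_smul {E F : Type*} [NormedAddCommGroup E] [NormedSpace ℝ E]
    [NormedAddCommGroup F] [NormedSpace ℝ F] {f : E → F} {f' : E →L[ℝ] F} {x v : E} {s : ℝ}
    (hf : HasFDerivAt f f' (x + s • v)) :
    HasDerivAt (fun s : ℝ => f (x + s • v)) (f' v) s :=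
  hf.comp_hasDerivAt s <| by simpa using ((hasDerivAt_id s).smul_const v).const_add x

end DerivativesAlongLines

section Continuity

theorem tendsto_add_smul_nhds_zero {E : Type*} [AddCommGroup E] [Module ℝ E] [TopologicalSpace E]
    [ContinuousAdd E] [ContinuousSMul ℝ E] (x v : E) :
    Tendsto (fun s : ℝ => x + s • v) (𝓝 0) (𝓝 x) := by
  have : Continuous fun s : ℝ => x + s • v := by fun_prop
  simpa using this.tendsto 0

theorem norm_add_smul_normalize {E : Type*} [NormedAddCommGroup E] [NormedSpace ℝ E] {v : E}
    (hv : v ≠ 0) (s : ℝ) :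
    ‖v + s • NormedSpace.normalize v‖ = |‖v‖ + s| := by
  have : v + s • NormedSpace.normalize v = (‖v‖ + s) • NormedSpace.normalize v := by
    rw [add_smul, NormedSpace.norm_smul_normalize]
  rw [this, norm_smul, NormedSpace.norm_normalize hv, mul_one, Real.norm_eq_abs]

theorem continuousOn_comp₂ {W X Y Z : Type*} [TopologicalSpace W] [TopologicalSpace X]
    [TopologicalSpace Y] [TopologicalSpace Z] {f : X → Y → Z} {D : Set (X × Y)}
    (hf : ContinuousOn (fun p : X × Y => f p.1 p.2) D) {g : W → X} {k : W → Y} {S : Set W}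
    (hg : ContinuousOn g S) (hk : ContinuousOn k S) (h : ∀ w ∈ S, (g w, k w) ∈ D) :
    ContinuousOn (fun w => f (g w) (k w)) S :=
  hf.comp (hg.prodMk hk) h

theorem continuousOn_normalize_sub {E : Type*} [NormedAddCommGroup E] [NormedSpace ℝ E] :
    ContinuousOn (fun p : E × E => NormedSpace.normalize (p.2 - p.1)) {p | p.1 ≠ p.2} := by
  have sub_cont : Continuous fun p : E × E => p.2 - p.1 := by fun_prop
  exact (sub_cont.norm.continuousOn.inv₀ fun p hp => norm_ne_zero_iff.2 <|
    sub_ne_zero.2 <| Ne.symm hp).smul sub_cont.continuousOn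

theorem tendsto_div_const_nhdsGT_zero {c : ℝ} (hc : 0 < c) :
    Tendsto (fun t => t / c) (𝓝[>] 0) (𝓝[>] 0) := by
  refine tendsto_nhdsWithin_iff.2
    ⟨?_, eventually_nhdsWithin_of_forall fun t (ht : 0 < t) => div_pos ht hc⟩
  exact ((continuous_id.div_const c).tendsto' 0 0 (zero_div c)).mono_left nhdsWithin_le_nhds

theorem continuousOn_two_point_sub {X F : Type*} [TopologicalSpace X] [TopologicalSpace F]
    [AddGroup F] [IsTopologicalAddGroup F] {f : X → ℝ → F} {s : Set X} {I : Set ℝ}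
    (hf : ContinuousOn (fun p : X × ℝ => f p.1 p.2) (s ×ˢ I)) :
    ContinuousOn (fun p : (X × X) × ℝ => f p.1.2 p.2 - f p.1.1 p.2) ((s ×ˢ s) ×ˢ I) :=
  (continuousOn_comp₂ hf (by fun_prop) (by fun_prop) fun _ hp => ⟨hp.1.2, hp.2⟩).sub
    (continuousOn_comp₂ hf (by fun_prop) (by fun_prop) fun _ hp => ⟨hp.1.1, hp.2⟩)

theorem exists_mem_of_eventually_nhdsGT_exists {X : Type*} [TopologicalSpace X]
    {C : Set X} (hC : IsCompact C) {P : ℝ → X → Prop}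
    (hP : IsClosed {q : X × ℝ | q.1 ∈ C ∧ P q.2 q.1}) {s : ℝ}
    (h : ∀ᶠ δ in 𝓝[>] s, ∃ p ∈ C, P δ p) : ∃ p ∈ C, P s p := by
  have compact : IsCompact ({q : X × ℝ | q.1 ∈ C ∧ P q.2 q.1} ∩ C ×ˢ Icc s (s + 1)) :=
    (hC.prod isCompact_Icc).inter_left hP
  have limit_mem : s ∈ Prod.snd '' ({q : X × ℝ | q.1 ∈ C ∧ P q.2 q.1} ∩ C ×ˢ Icc s (s + 1)) := by
    refine (compact.image continuous_snd).isClosed.mem_of_frequently_of_tendsto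
      (Eventually.frequently ?_) (tendsto_id.mono_left nhdsWithin_le_nhds : Tendsto id (𝓝[>] s) _)
    filter_upwards [h, Ioc_mem_nhdsGT (lt_add_one s)] with δ ⟨p, hpC, hp⟩ hδ
    exact ⟨(p, δ), ⟨⟨hpC, hp⟩, hpC, Ioc_subset_Icc_self hδ⟩, rfl⟩
  obtain ⟨⟨p, _⟩, ⟨⟨hpC, hp⟩, _⟩, rfl⟩ := limit_mem
  exact ⟨p, hpC, hp⟩

end Continuity

/-! ### Outward normals and two-point maxima -/

section InnerProductSpace

variable {E : Type*} [NormedAddCommGroup E] [InnerProductSpace ℝ E]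

theorem hasFDerivAt_norm_of_ne_zero {v : E} (hv : v ≠ 0) :
    HasFDerivAt (fun w : E => ‖w‖) (innerSL ℝ (NormedSpace.normalize v)) v := by
  have h := (hasStrictFDerivAt_norm_sq v).hasFDerivAt.sqrt (by simpa using hv)
  simp only [Real.sqrt_sq (norm_nonneg _)] at h
  refine h.congr_fderiv ?_
  rw [NormedSpace.normalize, map_smul, ← Nat.cast_smul_eq_nsmul ℝ, smul_smul]
  congr 1
  push_cast
  field_simp

section Convex

/-- `ν` is an outward normal vector to `Ω` at `y`; the zero vector is included. -/
def IsOutwardNormal (Ω : Set E) (y ν : E) : Prop :=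
  ∀ z ∈ Ω, ⟪ν, z - y⟫ ≤ 0

variable {Ω : Set E} {y ν : E}

namespace IsOutwardNormal

theorem inner_nonpos_of_mem_closure (h : IsOutwardNormal Ω y ν) {z : E} (hz : z ∈ closure Ω) :
    ⟪ν, z - y⟫ ≤ 0 :=
  closure_minimal (t := {z | ⟪ν, z - y⟫ ≤ 0}) h (isClosed_le (by fun_prop) continuous_const) hz

theorem inner_neg_of_isOpen (h : IsOutwardNormal Ω y ν) (hΩ : IsOpen Ω) (hν : ν ≠ 0) {z : E}
    (hz : z ∈ Ω) : ⟪ν, z - y⟫ < 0 := by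
  obtain ⟨s, hs, hsΩ⟩ :=
    ((tendsto_add_smul_nhds_zero z ν).eventually (hΩ.mem_nhds hz)).exists_gt
  have hle : ⟪ν, z - y⟫ + s * ⟪ν, ν⟫ ≤ 0 := by
    simpa [add_sub_right_comm, inner_add_right, inner_smul_right] using h _ hsΩ
  have := mul_pos hs (real_inner_self_pos.2 hν)
  linarith

theorem eq_zero_of_mem_of_isOpen (h : IsOutwardNormal Ω y ν) (hΩ : IsOpen Ω) (hy : y ∈ Ω) :
    ν = 0 := by
  by_contra hν
  simpa using h.inner_neg_of_isOpen hΩ hν hy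

end IsOutwardNormal

theorem exists_ne_zero_isOutwardNormal [CompleteSpace E] (hΩ : IsOpen Ω) (hconv : Convex ℝ Ω)
    (hne : Ω.Nonempty) (hy : y ∉ Ω) : ∃ ν ≠ 0, IsOutwardNormal Ω y ν := by
  obtain ⟨f, hf⟩ := geometric_hahn_banach_open_point hconv hΩ hy
  obtain ⟨ν, rfl⟩ := (toDual ℝ E).surjective f
  simp only [toDual_apply_apply] at hf
  refine ⟨ν, ?_, fun z hz => ?_⟩
  · rintro rfl
    obtain ⟨z, hz⟩ := hne
    simpa using hf z hz
  · simpa [inner_sub_right] using (hf z hz).le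

theorem isOutwardNormal_of_isMaxOn {V : E → ℝ} {w : E} (hconv : Convex ℝ Ω)
    (hy : y ∈ closure Ω) (hV : HasFDerivWithinAt V (innerSL ℝ w) (closure Ω) y)
    (hmax : IsMaxOn V (closure Ω) y) : IsOutwardNormal Ω y w := fun z hz => by
  have cone : z - y ∈ posTangentConeAt (closure Ω) y :=
    sub_mem_posTangentConeAt_of_segment_subset <|
      hconv.closure.segment_subset hy (subset_closure hz)
  simpa using hmax.localize.hasFDerivWithinAt_nonpos hV cone

/-- Boundary points are excluded because an outward normal there makes an obtuse angle with the
direction from `a`, while the condition on `g` makes `V` strictly decreasing along it. -/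
theorem mem_and_gradient_eq_of_isMaxOn_sub_dist [CompleteSpace E] (hΩ : IsOpen Ω)
    (hconv : Convex ℝ Ω) {V : E → ℝ} {ρ : ℝ → ℝ} {g a : E} {ρ' : ℝ} (ha : a ∈ closure Ω)
    (hy : y ∈ closure Ω) (hya : y ≠ a) (hV : HasFDerivWithinAt V (innerSL ℝ g) (closure Ω) y)
    (hρ : HasDerivAt ρ ρ' ‖y - a‖) (hρ' : 0 ≤ ρ')
    (hmax : IsMaxOn (fun z => V z - ρ ‖z - a‖) (closure Ω) y)
    (hg : ∀ ν ≠ 0, IsOutwardNormal Ω y ν → ⟪g, ν⟫ < 0) :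
    y ∈ Ω ∧ g = ρ' • NormedSpace.normalize (y - a) := by
  have dist_deriv : HasFDerivAt (fun z => ρ ‖z - a‖)
      (innerSL ℝ (ρ' • NormedSpace.normalize (y - a))) y := by
    have norm_deriv := (hasFDerivAt_norm_of_ne_zero (sub_ne_zero.2 hya)).comp y
      (hasFDerivAt_sub_const a)
    refine (hρ.comp_hasFDerivAt y norm_deriv).congr_fderiv ?_
    ext
    simp
  have inner_normalize_nonneg {ν : E} (hν : IsOutwardNormal Ω y ν) :
      0 ≤ ⟪ρ' • NormedSpace.normalize (y - a), ν⟫ := by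
    have : ⟪ν, y - a⟫ = -⟪ν, a - y⟫ := by rw [← inner_neg_right, neg_sub]
    have := hν.inner_nonpos_of_mem_closure ha
    rw [NormedSpace.normalize, inner_smul_left, inner_smul_left, real_inner_comm]
    have : 0 ≤ ⟪ν, y - a⟫ := by linarith
    simp only [conj_trivial]
    positivity
  have normal : IsOutwardNormal Ω y (g - ρ' • NormedSpace.normalize (y - a)) :=
    isOutwardNormal_of_isMaxOn hconv hy
      ((hV.sub dist_deriv.hasFDerivWithinAt).congr_fderiv (map_sub ..).symm) hmax
  have gradient_eq : g = ρ' • NormedSpace.normalize (y - a) := by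
    by_contra hne
    have hne := sub_ne_zero.2 hne
    have := hg _ hne normal
    have := inner_normalize_nonneg normal
    have := real_inner_self_pos.2 hne
    rw [inner_sub_left] at this
    linarith
  refine ⟨by_contra fun hyΩ => ?_, gradient_eq⟩
  obtain ⟨ν, hν, hnormal⟩ :=
    exists_ne_zero_isOutwardNormal hΩ hconv (closure_nonempty_iff.1 ⟨a, ha⟩) hyΩ
  exact (hg ν hν hnormal).not_ge (gradient_eq ▸ inner_normalize_nonneg hnormal)

end Convex

section SecondOrder

variable {V W : E → ℝ} {gV gW : E → E} {HV HW : E →L[ℝ] E} {ρ ρ' : ℝ → ℝ} {ρ'' : ℝ} {x y : E}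

theorem hessian_le_of_isLocalMax_sub_dist
    (hV : ∀ᶠ z in 𝓝 y, HasFDerivAt V (innerSL ℝ (gV z)) z) (hgV : HasFDerivAt gV HV y)
    (hW : ∀ᶠ z in 𝓝 x, HasFDerivAt W (innerSL ℝ (gW z)) z) (hgW : HasFDerivAt gW HW x)
    (hρ : ∀ᶠ r in 𝓝 ‖y - x‖, HasDerivAt ρ (ρ' r) r) (hρ' : HasDerivAt ρ' ρ'' ‖y - x‖)
    (hmax : IsLocalMax (fun p : E × E => V p.2 - W p.1 - ρ ‖p.2 - p.1‖) (x, y))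
    {ξ η : E} {κ : ℝ} (hκ : ∀ᶠ s : ℝ in 𝓝 0, ‖y - x + s • (η - ξ)‖ = ‖y - x‖ + s * κ) :
    ⟪HV η, η⟫ - ⟪HW ξ, ξ⟫ ≤ κ ^ 2 * ρ'' := by
  set f : ℝ → ℝ := fun s => V (y + s • η) - W (x + s • ξ) - ρ (‖y - x‖ + s * κ) with f_def
  have f_max : IsLocalMax f 0 := by
    have along := ((tendsto_add_smul_nhds_zero x ξ).prodMk_nhds
      (tendsto_add_smul_nhds_zero y η)).eventually hmax
    filter_upwards [along, hκ] with s hs hκs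
    have dist_eq : y + s • η - (x + s • ξ) = y - x + s • (η - ξ) := by module
    simpa [f_def, dist_eq, hκs] using hs
  have ray_deriv (s : ℝ) : HasDerivAt (fun s => ‖y - x‖ + s * κ) κ s :=
    (hasDerivAt_mul_const κ).const_add _
  have f_deriv : ∀ᶠ s in 𝓝 0, HasDerivAt f
      (⟪gV (y + s • η), η⟫ - ⟪gW (x + s • ξ), ξ⟫ - ρ' (‖y - x‖ + s * κ) * κ) s := by
    filter_upwards [(tendsto_add_smul_nhds_zero y η).eventually hV,
      (tendsto_add_smul_nhds_zero x ξ).eventually hW,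
      (tendsto_add_smul_nhds_zero ‖y - x‖ κ).eventually hρ] with s hVs hWs hρs
    exact ((hasDerivAt_comp_add_smul hVs).sub (hasDerivAt_comp_add_smul hWs)).sub
      (hρs.comp s (ray_deriv s))
  have gradV : HasDerivAt (fun s : ℝ => ⟪gV (y + s • η), η⟫) ⟪HV η, η⟫ 0 := by
    simpa using (hasDerivAt_comp_add_smul (by simpa using hgV)).inner ℝ (hasDerivAt_const 0 η)
  have gradW : HasDerivAt (fun s : ℝ => ⟪gW (x + s • ξ), ξ⟫) ⟪HW ξ, ξ⟫ 0 := by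
    simpa using (hasDerivAt_comp_add_smul (by simpa using hgW)).inner ℝ (hasDerivAt_const 0 ξ)
  have gradρ : HasDerivAt (fun s : ℝ => ρ' (‖y - x‖ + s * κ) * κ) (ρ'' * κ * κ) 0 :=
    (hρ'.comp_of_eq 0 (ray_deriv 0) (by simp)).mul_const κ
  have := secondDeriv_nonpos_of_isLocalMax f_max f_deriv ((gradV.sub gradW).sub gradρ)
  linarith

theorem hessian_sub_nonpos_of_isLocalMax_sub_dist
    (hV : ∀ᶠ z in 𝓝 y, HasFDerivAt V (innerSL ℝ (gV z)) z) (hgV : HasFDerivAt gV HV y)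
    (hW : ∀ᶠ z in 𝓝 x, HasFDerivAt W (innerSL ℝ (gW z)) z) (hgW : HasFDerivAt gW HW x)
    (hρ : ∀ᶠ r in 𝓝 ‖y - x‖, HasDerivAt ρ (ρ' r) r) (hρ' : HasDerivAt ρ' ρ'' ‖y - x‖)
    (hmax : IsLocalMax (fun p : E × E => V p.2 - W p.1 - ρ ‖p.2 - p.1‖) (x, y)) (w : E) :
    ⟪(HV - HW) w, w⟫ ≤ 0 := by
  simpa [inner_sub_left] using
    hessian_le_of_isLocalMax_sub_dist hV hgV hW hgW hρ hρ' hmax (ξ := w) (η := w) (κ := 0) (by simp)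

theorem hessian_sub_normalize_le_of_isLocalMax_sub_dist (hxy : x ≠ y)
    (hV : ∀ᶠ z in 𝓝 y, HasFDerivAt V (innerSL ℝ (gV z)) z) (hgV : HasFDerivAt gV HV y)
    (hW : ∀ᶠ z in 𝓝 x, HasFDerivAt W (innerSL ℝ (gW z)) z) (hgW : HasFDerivAt gW HW x)
    (hρ : ∀ᶠ r in 𝓝 ‖y - x‖, HasDerivAt ρ (ρ' r) r) (hρ' : HasDerivAt ρ' ρ'' ‖y - x‖)
    (hmax : IsLocalMax (fun p : E × E => V p.2 - W p.1 - ρ ‖p.2 - p.1‖) (x, y)) :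
    ⟪(HV - HW) (NormedSpace.normalize (y - x)), NormedSpace.normalize (y - x)⟫ ≤ 4 * ρ'' := by
  set e := NormedSpace.normalize (y - x)
  have hv : y - x ≠ 0 := sub_ne_zero.2 hxy.symm
  have pos : ∀ᶠ s : ℝ in 𝓝 0, 0 < ‖y - x‖ + s * 2 :=
    (tendsto_add_smul_nhds_zero ‖y - x‖ 2).eventually (lt_mem_nhds (norm_pos_iff.2 hv))
  have dist_eq : ∀ᶠ s : ℝ in 𝓝 0, ‖y - x + s • (e - -e)‖ = ‖y - x‖ + s * 2 := by
    filter_upwards [pos] with s hs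
    have : s • (e - -e) = (s * 2) • e := by module
    rw [this, norm_add_smul_normalize hv, abs_of_pos hs]
  have h := hessian_le_of_isLocalMax_sub_dist hV hgV hW hgW hρ hρ' hmax dist_eq
  simpa [inner_sub_left, show (2 : ℝ) ^ 2 = 4 by norm_num] using h

end SecondOrder

section Trace

variable [FiniteDimensional ℝ E]

theorem trace_comp_nonpos_of_isPositive {B S : E →ₗ[ℝ] E} (hB : B.IsPositive)
    (hS : ∀ v, ⟪S v, v⟫ ≤ 0) : LinearMap.trace ℝ E (B ∘ₗ S) ≤ 0 := by
  set e := hB.isSymmetric.eigenvectorBasis rfl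
  rw [LinearMap.trace_eq_sum_inner _ e]
  refine Finset.sum_nonpos fun i _ => ?_
  calc ⟪e i, B (S (e i))⟫ = hB.isSymmetric.eigenvalues rfl i * ⟪S (e i), e i⟫ := by
        rw [← hB.isSymmetric, hB.isSymmetric.apply_eigenvectorBasis, inner_smul_left,
          real_inner_comm]
        rfl
    _ ≤ 0 := mul_nonpos_of_nonneg_of_nonpos (hB.nonneg_eigenvalues rfl i) (hS _)

theorem trace_comp_le_of_mul_inner_sq_le {B S : E →ₗ[ℝ] E} {e : E} {a : ℝ} (hB : B.IsSymmetric)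
    (hBe : ∀ v, a * ⟪e, v⟫ ^ 2 ≤ ⟪B v, v⟫) (hS : ∀ v, ⟪S v, v⟫ ≤ 0) :
    LinearMap.trace ℝ E (B ∘ₗ S) ≤ a * ⟪S e, e⟫ := by
  set R : E →ₗ[ℝ] E := (innerₛₗ ℝ e).smulRight e with R_def
  have inner_R (v w : E) : ⟪R v, w⟫ = ⟪e, v⟫ * ⟪e, w⟫ := by
    simp [R_def, inner_smul_left]
  have R_symm : R.IsSymmetric := fun v w => by
    rw [inner_R, real_inner_comm (R w), inner_R, mul_comm]
  have remainder_pos : (B - a • R).IsPositive := by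
    refine ⟨hB.sub (R_symm.smul (conj_trivial a)), fun v => ?_⟩
    calc 0 ≤ ⟪B v, v⟫ - a * ⟪e, v⟫ ^ 2 := sub_nonneg.2 (hBe v)
      _ = ⟪(B - a • R) v, v⟫ := by
        rw [LinearMap.sub_apply, LinearMap.smul_apply, inner_sub_left, real_inner_smul_left,
          inner_R, sq]
  have trace_R : LinearMap.trace ℝ E (R ∘ₗ S) = ⟪S e, e⟫ := by
    have : R ∘ₗ S = (innerₛₗ ℝ e ∘ₗ S).smulRight e := rfl
    simp [this, real_inner_comm]
  have := trace_comp_nonpos_of_isPositive remainder_pos hS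
  rwa [LinearMap.sub_comp, LinearMap.smul_comp, map_sub, map_smul, trace_R, smul_eq_mul,
    sub_nonpos] at this

end Trace

section TwoPoint

variable {Ω : Set E} {V W : E → ℝ} {ρ : ℝ → ℝ} {gV gW x y : E} {ρ' : ℝ}

theorem mem_and_gradient_eq_of_isMaxOn_two_point [CompleteSpace E] (hΩ : IsOpen Ω)
    (hconv : Convex ℝ Ω) (hx : x ∈ closure Ω) (hy : y ∈ closure Ω) (hxy : x ≠ y)
    (hV : HasFDerivWithinAt V (innerSL ℝ gV) (closure Ω) y)
    (hW : HasFDerivWithinAt W (innerSL ℝ gW) (closure Ω) x)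
    (hρ : HasDerivAt ρ ρ' ‖y - x‖) (hρ' : 0 ≤ ρ')
    (hmax : IsMaxOn (fun p : E × E => V p.2 - W p.1 - ρ ‖p.2 - p.1‖)
      (closure Ω ×ˢ closure Ω) (x, y))
    (hgV : ∀ ν ≠ 0, IsOutwardNormal Ω y ν → ⟪gV, ν⟫ < 0)
    (hgW : ∀ ν ≠ 0, IsOutwardNormal Ω x ν → 0 < ⟪gW, ν⟫) :
    (x, y) ∈ Ω ×ˢ Ω ∧ gV = ρ' • NormedSpace.normalize (y - x) ∧
      gW = ρ' • NormedSpace.normalize (y - x) := by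
  have hmax := isMaxOn_iff.1 hmax
  have max_right : IsMaxOn (fun z => V z - ρ ‖z - x‖) (closure Ω) y :=
    isMaxOn_iff.2 fun z hz => by linarith [hmax (x, z) ⟨hx, hz⟩]
  have max_left : IsMaxOn (fun z => -W z - ρ ‖z - y‖) (closure Ω) x := isMaxOn_iff.2 fun z hz => by
    rw [norm_sub_rev z, norm_sub_rev x]
    linarith [hmax (z, y) ⟨hz, hy⟩]
  have right := mem_and_gradient_eq_of_isMaxOn_sub_dist hΩ hconv hx hy hxy.symm hV hρ hρ'
    max_right hgV
  have left := mem_and_gradient_eq_of_isMaxOn_sub_dist (g := -gW) hΩ hconv hy hx hxy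
    (hW.neg.congr_fderiv (map_neg ..).symm) (norm_sub_rev y x ▸ hρ) hρ' max_left
    fun ν hν hnormal => by simpa using hgW ν hν hnormal
  refine ⟨⟨left.1, right.1⟩, right.2, ?_⟩
  rw [← neg_sub x y, NormedSpace.normalize_neg, smul_neg, ← left.2, neg_neg]

end TwoPoint

theorem hasFDerivAt_const_mul_norm_sub_sq (c : ℝ) (a x : E) :
    HasFDerivAt (fun z => c * ‖z - a‖ ^ 2) (innerSL ℝ ((2 * c) • (x - a))) x := by
  refine (((hasFDerivAt_sub_const a).norm_sq).const_mul c).congr_fderiv ?_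
  ext v
  simp only [smul_apply, ContinuousLinearMap.comp_id, innerSL_apply_apply, inner_smul_left,
    conj_trivial, smul_eq_mul, two_smul, add_apply]
  ring

end InnerProductSpace

/-! ### Barriers -/

/-- A spatially increasing solution of the reduced equation `Φ_t = 4 a(Φ_z) Φ_zz` on
`(0, ∞) × (0, ∞)` that vanishes at `z = 0` and has initial value `M`. -/
structure IsBarrier (M : ℝ) (a : ℝ → ℝ) (Φ Φt Φz Φzz : ℝ → ℝ → ℝ) : Prop where
  continuousOn : ContinuousOn (fun p : ℝ × ℝ => Φ p.1 p.2) (Ici 0 ×ˢ Ioi 0)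
  time_deriv : ∀ z ∈ Ioi 0, ∀ t ∈ Ioi 0, HasDerivAt (Φ z) (Φt z t) t
  deriv : ∀ z ∈ Ioi 0, ∀ t ∈ Ioi 0, HasDerivAt (fun w => Φ w t) (Φz z t) z
  second_deriv : ∀ z ∈ Ioi 0, ∀ t ∈ Ioi 0, HasDerivAt (fun w => Φz w t) (Φzz z t) z
  continuousOn_time_deriv : ContinuousOn (fun p : ℝ × ℝ => Φt p.1 p.2) (Ioi 0 ×ˢ Ioi 0)
  continuousOn_deriv : ContinuousOn (fun p : ℝ × ℝ => Φz p.1 p.2) (Ioi 0 ×ˢ Ioi 0)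
  continuousOn_second_deriv : ContinuousOn (fun p : ℝ × ℝ => Φzz p.1 p.2) (Ioi 0 ×ˢ Ioi 0)
  deriv_pos : ∀ z ∈ Ioi 0, ∀ t ∈ Ioi 0, 0 < Φz z t
  pde : ∀ z ∈ Ioi 0, ∀ t ∈ Ioi 0, Φt z t = 4 * a (Φz z t) * Φzz z t
  initial : ∀ z ∈ Ioi 0, Tendsto (Φ z) (𝓝[>] 0) (𝓝 M)
  zero : ∀ t ∈ Ioi 0, Φ 0 t = 0

namespace IsBarrier

variable {M : ℝ} {a : ℝ → ℝ} {Φ Φt Φz Φzz : ℝ → ℝ → ℝ}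

theorem monotoneOn (h : IsBarrier M a Φ Φt Φz Φzz) {t : ℝ} (ht : 0 < t) :
    MonotoneOn (fun z => Φ z t) (Ici 0) := by
  refine (strictMonoOn_of_deriv_pos (convex_Ici 0) ?_ fun z hz => ?_).monotoneOn
  · exact h.continuousOn.comp (f := fun z : ℝ => (z, t)) (by fun_prop) fun z hz => ⟨hz, ht⟩
  · rw [interior_Ici] at hz
    rw [(h.deriv z hz t ht).deriv]
    exact h.deriv_pos z hz t ht

theorem nonneg (h : IsBarrier M a Φ Φt Φz Φzz) {z t : ℝ} (hz : 0 ≤ z) (ht : 0 < t) :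
    0 ≤ Φ z t := by
  simpa [h.zero t ht] using h.monotoneOn ht self_mem_Ici hz hz

theorem rescale (hM : 0 < M) (h : IsBarrier 1 a Φ Φt Φz Φzz) :
    IsBarrier M a (fun z t => M * Φ (z / M) (t / M ^ 2)) (fun z t => M⁻¹ * Φt (z / M) (t / M ^ 2))
      (fun z t => Φz (z / M) (t / M ^ 2)) fun z t => M⁻¹ * Φzz (z / M) (t / M ^ 2) := by
  have space_pos {z : ℝ} (hz : 0 < z) : 0 < z / M := by positivity
  have time_pos {t : ℝ} (ht : 0 < t) : 0 < t / M ^ 2 := by positivity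
  have maps_pos : MapsTo (fun p : ℝ × ℝ => (p.1 / M, p.2 / M ^ 2)) (Ioi 0 ×ˢ Ioi 0)
      (Ioi 0 ×ˢ Ioi 0) := fun p hp => ⟨space_pos hp.1, time_pos hp.2⟩
  have maps_nonneg : MapsTo (fun p : ℝ × ℝ => (p.1 / M, p.2 / M ^ 2)) (Ici 0 ×ˢ Ioi 0)
      (Ici 0 ×ˢ Ioi 0) := fun p hp => ⟨div_nonneg hp.1 hM.le, time_pos hp.2⟩
  have div_deriv (c z : ℝ) : HasDerivAt (fun z : ℝ => z / c) (1 / c) z :=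
    (hasDerivAt_id z).div_const c
  constructor
  case continuousOn => exact continuousOn_const.mul (h.continuousOn.comp (by fun_prop) maps_nonneg)
  case time_deriv =>
    intro z hz t ht
    refine (((h.time_deriv _ (space_pos hz) _ (time_pos ht)).comp t (div_deriv _ t)).const_mul
      M).congr_deriv ?_
    field_simp
  case deriv =>
    intro z hz t ht
    refine (((h.deriv _ (space_pos hz) _ (time_pos ht)).comp z (div_deriv M z)).const_mul
      M).congr_deriv ?_
    field_simp
  case second_deriv =>
    intro z hz t ht
    refine ((h.second_deriv _ (space_pos hz) _ (time_pos ht)).comp z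
      (div_deriv M z)).congr_deriv ?_
    field_simp
  case continuousOn_time_deriv =>
    exact continuousOn_const.mul (h.continuousOn_time_deriv.comp (by fun_prop) maps_pos)
  case continuousOn_deriv => exact h.continuousOn_deriv.comp (by fun_prop) maps_pos
  case continuousOn_second_deriv =>
    exact continuousOn_const.mul (h.continuousOn_second_deriv.comp (by fun_prop) maps_pos)
  case deriv_pos => exact fun z hz t ht => h.deriv_pos _ (space_pos hz) _ (time_pos ht)
  case pde =>
    intro z hz t ht
    simp only [h.pde _ (space_pos hz) _ (time_pos ht)]
    ring
  case initial =>
    intro z hz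
    simpa using ((h.initial _ (space_pos hz)).comp
      (tendsto_div_const_nhdsGT_zero (sq_pos_of_pos hM))).const_mul M
  case zero => exact fun t ht => by simp [h.zero _ (time_pos ht)]

end IsBarrier

section TwoPointGap

variable {E : Type*} [NormedAddCommGroup E]

/-- The two-point function `Z(x, y, t) = u(y, t) - u(x, t) - Φ(|y - x|, t)` whose nonpositivity is
the modulus estimate, with its argument grouped as `((x, y), t)`. -/
def twoPointGap (u : E → ℝ → ℝ) (Φ : ℝ → ℝ → ℝ) (p : (E × E) × ℝ) : ℝ :=
  u p.1.2 p.2 - u p.1.1 p.2 - Φ ‖p.1.2 - p.1.1‖ p.2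

/-- The two-point function with the terms `δ (|y - x₀|² + |x - x₀|²)` and `ε t` subtracted. The
former makes boundary conditions strict, the latter the differential inequality. -/
def penalizedGap (u : E → ℝ → ℝ) (Φ : ℝ → ℝ → ℝ) (x₀ : E) (ε δ : ℝ) (p : (E × E) × ℝ) : ℝ :=
  twoPointGap u Φ p - δ * (‖p.1.2 - x₀‖ ^ 2 + ‖p.1.1 - x₀‖ ^ 2) - ε * p.2

theorem IsBarrier.ne_of_pos_twoPointGap {M : ℝ} {a : ℝ → ℝ} {u : E → ℝ → ℝ}
    {Φ Φt Φz Φzz : ℝ → ℝ → ℝ} (hB : IsBarrier M a Φ Φt Φz Φzz) {p : (E × E) × ℝ} (ht : 0 < p.2)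
    (hp : 0 < twoPointGap u Φ p) : p.1.1 ≠ p.1.2 := by
  intro heq
  simp [twoPointGap, heq, hB.zero _ ht] at hp

end TwoPointGap

/-! ### The maximum principle for the Neumann problem -/

section NeumannProblem

variable {E : Type*} [NormedAddCommGroup E] [InnerProductSpace ℝ E]

/-- A classical solution on `Ω × (0, T]` of `u_t = tr (A(Du) D²u) + b(Du, t)` with homogeneous
Neumann data, whose derivatives `ut`, `Du` and `D2u` extend continuously to `closure Ω × (0, T]`.
Gradient and Hessian are encoded as a vector and an endomorphism through the inner product. -/
structure IsNeumannSolution (T : ℝ) (Ω : Set E) (A : E → E →L[ℝ] E) (b : E → ℝ → ℝ)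
    (u ut : E → ℝ → ℝ) (Du : E → ℝ → E) (D2u : E → ℝ → E →L[ℝ] E) : Prop where
  continuousOn : ContinuousOn (fun p : E × ℝ => u p.1 p.2) (closure Ω ×ˢ Icc 0 T)
  time_deriv : ∀ x ∈ Ω, ∀ t ∈ Ioc 0 T, HasDerivWithinAt (u x) (ut x t) (Ioc 0 T) t
  gradient : ∀ x ∈ Ω, ∀ t ∈ Ioc 0 T, HasFDerivAt (fun z => u z t) (innerSL ℝ (Du x t)) x
  hessian : ∀ x ∈ Ω, ∀ t ∈ Ioc 0 T, HasFDerivAt (fun z => Du z t) (D2u x t) x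
  continuousOn_time_deriv : ContinuousOn (fun p : E × ℝ => ut p.1 p.2) (closure Ω ×ˢ Ioc 0 T)
  continuousOn_gradient : ContinuousOn (fun p : E × ℝ => Du p.1 p.2) (closure Ω ×ˢ Ioc 0 T)
  continuousOn_hessian : ContinuousOn (fun p : E × ℝ => D2u p.1 p.2) (closure Ω ×ˢ Ioc 0 T)
  pde : ∀ x ∈ Ω, ∀ t ∈ Ioc 0 T,
    ut x t = LinearMap.trace ℝ E (A (Du x t) ∘L D2u x t) + b (Du x t) t
  neumann : ∀ x ∈ frontier Ω, ∀ t ∈ Ioc 0 T, ∀ ν, IsOutwardNormal Ω x ν → ⟪Du x t, ν⟫ = 0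

/-- The first- and second-order conditions at an interior maximum `p = ((x, y), t)` of the
penalized two-point function. They are closed conditions, so they persist as `δ → 0`. -/
structure IsPenalizedContact (ut : E → ℝ → ℝ) (Du : E → ℝ → E) (D2u : E → ℝ → E →L[ℝ] E)
    (Φt Φz Φzz : ℝ → ℝ → ℝ) (x₀ : E) (ε δ : ℝ) (p : (E × E) × ℝ) : Prop where
  gradient_right : Du p.1.2 p.2 =
    Φz ‖p.1.2 - p.1.1‖ p.2 • NormedSpace.normalize (p.1.2 - p.1.1) + (2 * δ) • (p.1.2 - x₀)
  gradient_left : Du p.1.1 p.2 =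
    Φz ‖p.1.2 - p.1.1‖ p.2 • NormedSpace.normalize (p.1.2 - p.1.1) - (2 * δ) • (p.1.1 - x₀)
  time_deriv : ε ≤ ut p.1.2 p.2 - ut p.1.1 p.2 - Φt ‖p.1.2 - p.1.1‖ p.2
  hessian : ∀ w, ⟪(D2u p.1.2 p.2 - D2u p.1.1 p.2) w, w⟫ ≤ 4 * δ * ‖w‖ ^ 2
  hessian_normalize :
    ⟪(D2u p.1.2 p.2 - D2u p.1.1 p.2) (NormedSpace.normalize (p.1.2 - p.1.1)),
      NormedSpace.normalize (p.1.2 - p.1.1)⟫ ≤ 4 * Φzz ‖p.1.2 - p.1.1‖ p.2 + 4 * δ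

namespace IsNeumannSolution

variable {T M : ℝ} {Ω : Set E} {A : E → E →L[ℝ] E} {b : E → ℝ → ℝ} {u ut : E → ℝ → ℝ}
  {Du : E → ℝ → E} {D2u : E → ℝ → E →L[ℝ] E} {a : ℝ → ℝ} {Φ Φt Φz Φzz : ℝ → ℝ → ℝ}
  {x₀ x y : E} {ε δ t : ℝ}

theorem pde_of_mem_closure [FiniteDimensional ℝ E] (h : IsNeumannSolution T Ω A b u ut Du D2u)
    (hA : Continuous A) {t : ℝ} (ht : t ∈ Ioc 0 T) (hb : Continuous fun p => b p t) {x : E}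
    (hx : x ∈ closure Ω) :
    ut x t = LinearMap.trace ℝ E (A (Du x t) ∘L D2u x t) + b (Du x t) t := by
  have slice : MapsTo (fun z : E => (z, t)) (closure Ω) (closure Ω ×ˢ Ioc 0 T) :=
    fun z hz => ⟨hz, ht⟩
  have slice_cont : ContinuousOn (fun z : E => (z, t)) (closure Ω) := by fun_prop
  have gradient_cont := h.continuousOn_gradient.comp slice_cont slice
  have hessian_cont := h.continuousOn_hessian.comp slice_cont slice
  have trace_cont : Continuous fun B : E →L[ℝ] E => LinearMap.trace ℝ E B :=
    (LinearMap.trace ℝ E ∘ₗ ContinuousLinearMap.coeLM ℝ).continuous_of_finiteDimensional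
  exact EqOn.of_subset_closure (fun z hz => h.pde z hz t ht)
    (h.continuousOn_time_deriv.comp slice_cont slice)
    ((trace_cont.comp_continuousOn ((hA.comp_continuousOn gradient_cont).clm_comp
      hessian_cont)).add (hb.comp_continuousOn gradient_cont)) subset_closure subset_rfl hx

theorem inner_gradient_eq_zero (h : IsNeumannSolution T Ω A b u ut Du D2u) (hΩ : IsOpen Ω)
    (hx : x ∈ closure Ω) (ht : t ∈ Ioc 0 T) {ν : E} (hν : IsOutwardNormal Ω x ν) :
    ⟪Du x t, ν⟫ = 0 := by
  by_cases hxΩ : x ∈ Ω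
  · rw [hν.eq_zero_of_mem_of_isOpen hΩ hxΩ, inner_zero_right]
  · exact h.neumann x (hΩ.frontier_eq ▸ ⟨hx, hxΩ⟩) t ht ν hν

theorem hasFDerivWithinAt_closure (h : IsNeumannSolution T Ω A b u ut Du D2u) (hΩ : IsOpen Ω)
    (hconv : Convex ℝ Ω) (hx : x ∈ closure Ω) (ht : t ∈ Ioc 0 T) :
    HasFDerivWithinAt (fun z => u z t) (innerSL ℝ (Du x t)) (closure Ω) x := by
  have slice_cont : ContinuousOn (fun z : E => (z, t)) (closure Ω) := by fun_prop
  refine hasFDerivWithinAt_closure_of_continuousOn hΩ hconv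
    (h.continuousOn.comp slice_cont fun z hz => ⟨hz, Ioc_subset_Icc_self ht⟩) ?_
    (fun z hz => h.gradient z hz t ht) hx
  exact (innerSL ℝ).continuous.comp_continuousOn
    (h.continuousOn_gradient.comp slice_cont fun z hz => ⟨hz, ht⟩)

theorem eventually_twoPointGap_lt (h : IsNeumannSolution T Ω A b u ut Du D2u)
    (hB : IsBarrier M a Φ Φt Φz Φzz) (hT : 0 < T) (hΩ : IsCompact (closure Ω))
    (hosc : ∀ x ∈ closure Ω, ∀ y ∈ closure Ω, u x 0 - u y 0 ≤ M) {c : ℝ} (hc : 0 < c) :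
    ∀ᶠ t in 𝓝[>] 0, ∀ x ∈ closure Ω, ∀ y ∈ closure Ω, twoPointGap u Φ ((x, y), t) < c := by
  obtain ⟨d, hd, unif⟩ := Metric.uniformContinuousOn_iff.1
    ((hΩ.prod isCompact_Icc).uniformContinuousOn_of_continuous h.continuousOn) (c / 3)
    (by positivity)
  filter_upwards [(hB.initial d hd).eventually (lt_mem_nhds (show M - c / 3 < M by linarith)),
    Ioo_mem_nhdsGT hT, Ioo_mem_nhdsGT hd] with t hΦ htT htd x hx y hy
  have htI : t ∈ Icc 0 T := Ioo_subset_Icc_self htT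
  rcases lt_or_ge (dist y x) d with near | far
  · have space : |u y t - u x t| < c / 3 := unif (y, t) ⟨hy, htI⟩ (x, t) ⟨hx, htI⟩ (by simpa)
    have := hB.nonneg (norm_nonneg (y - x)) htT.1
    simp only [twoPointGap]
    linarith [(abs_lt.1 space).2]
  · have time {z : E} (hz : z ∈ closure Ω) : |u z t - u z 0| < c / 3 :=
      unif (z, t) ⟨hz, htI⟩ (z, 0) ⟨hz, left_mem_Icc.2 hT.le⟩
        (by simpa [abs_of_pos htT.1] using htd.2)
    have : Φ d t ≤ Φ ‖y - x‖ t :=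
      hB.monotoneOn htT.1 hd.le (norm_nonneg _) (dist_eq_norm y x ▸ far)
    simp only [twoPointGap]
    linarith [(abs_lt.1 (time hy)).2, (abs_lt.1 (time hx)).1, hosc y hy x hx]

theorem mem_and_gradient_eq_of_isMaxOn_penalizedGap [CompleteSpace E]
    (h : IsNeumannSolution T Ω A b u ut Du D2u) (hB : IsBarrier M a Φ Φt Φz Φzz) (hΩ : IsOpen Ω)
    (hconv : Convex ℝ Ω) (hx₀ : x₀ ∈ Ω) (hδ : 0 < δ) (hx : x ∈ closure Ω) (hy : y ∈ closure Ω)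
    (hxy : x ≠ y) (ht : t ∈ Ioc 0 T)
    (hmax : IsMaxOn (fun q => penalizedGap u Φ x₀ ε δ (q, t)) (closure Ω ×ˢ closure Ω) (x, y)) :
    (x, y) ∈ Ω ×ˢ Ω ∧
      Du y t = Φz ‖y - x‖ t • NormedSpace.normalize (y - x) + (2 * δ) • (y - x₀) ∧
      Du x t = Φz ‖y - x‖ t • NormedSpace.normalize (y - x) - (2 * δ) • (x - x₀) := by
  have hr : 0 < ‖y - x‖ := norm_sub_pos_iff.2 hxy.symm
  have penalized_deriv (c : ℝ) {z : E} (hz : z ∈ closure Ω) :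
      HasFDerivWithinAt (fun z => u z t - c * ‖z - x₀‖ ^ 2)
        (innerSL ℝ (Du z t - (2 * c) • (z - x₀))) (closure Ω) z :=
    ((h.hasFDerivWithinAt_closure hΩ hconv hz ht).sub
      (hasFDerivAt_const_mul_norm_sub_sq c x₀ z).hasFDerivWithinAt).congr_fderiv (map_sub ..).symm
  have penalized_normal (c : ℝ) {z ν : E} (hz : z ∈ closure Ω) (hν : IsOutwardNormal Ω z ν) :
      ⟪Du z t - (2 * c) • (z - x₀), ν⟫ = 2 * c * ⟪ν, x₀ - z⟫ := by
    rw [inner_sub_left, h.inner_gradient_eq_zero hΩ hz ht hν, real_inner_smul_left,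
      real_inner_comm, ← neg_sub x₀ z, inner_neg_right]
    ring
  obtain ⟨mem, right, left⟩ := mem_and_gradient_eq_of_isMaxOn_two_point hΩ hconv hx hy hxy
    (penalized_deriv δ hy) (penalized_deriv (-δ) hx) (hB.deriv _ hr t ht.1)
    (hB.deriv_pos _ hr t ht.1).le
    (isMaxOn_iff.2 fun q hq => by
      have := isMaxOn_iff.1 hmax q hq
      simp only [penalizedGap, twoPointGap] at this ⊢
      linarith)
    (fun ν hν hnormal => by
      rw [penalized_normal δ hy hnormal]
      exact mul_neg_of_pos_of_neg (by positivity) (hnormal.inner_neg_of_isOpen hΩ hν hx₀))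
    (fun ν hν hnormal => by
      rw [penalized_normal (-δ) hx hnormal]
      exact mul_pos_of_neg_of_neg (by linarith) (hnormal.inner_neg_of_isOpen hΩ hν hx₀))
  refine ⟨mem, sub_eq_iff_eq_add.1 right, ?_⟩
  rw [← left]
  module

theorem hessian_le_of_isMaxOn_penalizedGap
    (h : IsNeumannSolution T Ω A b u ut Du D2u) (hB : IsBarrier M a Φ Φt Φz Φzz) (hΩ : IsOpen Ω)
    (hx : x ∈ Ω) (hy : y ∈ Ω) (hxy : x ≠ y) (ht : t ∈ Ioc 0 T)
    (hmax : IsMaxOn (fun q => penalizedGap u Φ x₀ ε δ (q, t)) (closure Ω ×ˢ closure Ω) (x, y)) :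
    (∀ w, ⟪(D2u y t - D2u x t) w, w⟫ ≤ 4 * δ * ‖w‖ ^ 2) ∧
      ⟪(D2u y t - D2u x t) (NormedSpace.normalize (y - x)), NormedSpace.normalize (y - x)⟫ ≤
        4 * Φzz ‖y - x‖ t + 4 * δ := by
  have hr : 0 < ‖y - x‖ := norm_sub_pos_iff.2 hxy.symm
  have gradient (c : ℝ) {z : E} (hz : z ∈ Ω) :
      ∀ᶠ z in 𝓝 z, HasFDerivAt (fun z => u z t - c * ‖z - x₀‖ ^ 2)
        (innerSL ℝ (Du z t - (2 * c) • (z - x₀))) z := by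
    filter_upwards [hΩ.mem_nhds hz] with z hz
    exact ((h.gradient z hz t ht).sub
      (hasFDerivAt_const_mul_norm_sub_sq c x₀ z)).congr_fderiv (map_sub ..).symm
  have hessian (c : ℝ) {z : E} (hz : z ∈ Ω) :
      HasFDerivAt (fun z => Du z t - (2 * c) • (z - x₀)) (D2u z t - (2 * c) • .id ℝ E) z :=
    (h.hessian z hz t ht).sub ((hasFDerivAt_sub_const x₀).const_smul (2 * c))
  have barrier_deriv : ∀ᶠ r in 𝓝 ‖y - x‖, HasDerivAt (fun z => Φ z t) (Φz r t) r :=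
    (lt_mem_nhds hr).mono fun r hr => hB.deriv r hr t ht.1
  have local_max : IsLocalMax (fun p : E × E => u p.2 t - δ * ‖p.2 - x₀‖ ^ 2 -
      (u p.1 t - -δ * ‖p.1 - x₀‖ ^ 2) - Φ ‖p.2 - p.1‖ t) (x, y) := by
    filter_upwards [(hΩ.prod hΩ).mem_nhds ⟨hx, hy⟩] with q hq
    have := isMaxOn_iff.1 hmax q ⟨subset_closure hq.1, subset_closure hq.2⟩
    simp only [penalizedGap, twoPointGap] at this
    linarith
  have inner_hessian (w : E) : ⟪(D2u y t - (2 * δ) • .id ℝ E - (D2u x t - (2 * -δ) • .id ℝ E)) w,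
      w⟫ = ⟪(D2u y t - D2u x t) w, w⟫ - 4 * δ * ‖w‖ ^ 2 := by
    rw [← real_inner_self_eq_norm_sq, ← real_inner_smul_left, ← inner_sub_left]
    congr 1
    simp only [sub_apply, smul_apply, ContinuousLinearMap.id_apply]
    module
  refine ⟨fun w => ?_, ?_⟩
  · have := hessian_sub_nonpos_of_isLocalMax_sub_dist (gradient δ hy) (hessian δ hy)
      (gradient (-δ) hx) (hessian (-δ) hx) barrier_deriv (hB.second_deriv _ hr t ht.1) local_max w
    rw [inner_hessian] at this
    linarith
  · have := hessian_sub_normalize_le_of_isLocalMax_sub_dist hxy (gradient δ hy) (hessian δ hy)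
      (gradient (-δ) hx) (hessian (-δ) hx) barrier_deriv (hB.second_deriv _ hr t ht.1) local_max
    rw [inner_hessian, NormedSpace.norm_normalize (sub_ne_zero.2 hxy.symm)] at this
    linarith

theorem le_time_deriv_of_isMaxOn_penalizedGap (h : IsNeumannSolution T Ω A b u ut Du D2u)
    (hB : IsBarrier M a Φ Φt Φz Φzz) {t₀ : ℝ} (ht₀ : t₀ ∈ Ico 0 t) (htT : t ≤ T) (hx : x ∈ Ω)
    (hy : y ∈ Ω) (hxy : x ≠ y)
    (hmax : IsMaxOn (fun s => penalizedGap u Φ x₀ ε δ ((x, y), s)) (Icc t₀ t) t) :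
    ε ≤ ut y t - ut x t - Φt ‖y - x‖ t := by
  have ht : t ∈ Ioc 0 T := ⟨ht₀.1.trans_lt ht₀.2, htT⟩
  have time_deriv {z : E} (hz : z ∈ Ω) : HasDerivWithinAt (u z) (ut z t) (Iic t) t := by
    refine (h.time_deriv z hz t ht).mono_of_mem_nhdsWithin ?_
    filter_upwards [self_mem_nhdsWithin, nhdsWithin_le_nhds (lt_mem_nhds ht.1)] with s hs hs₀
    exact ⟨hs₀, le_trans hs htT⟩
  have barrier_deriv := hB.time_deriv _ (norm_sub_pos_iff.2 hxy.symm) t ht.1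
  have gap_deriv := ((((time_deriv hy).sub (time_deriv hx)).sub
    barrier_deriv.hasDerivWithinAt).sub_const (δ * (‖y - x₀‖ ^ 2 + ‖x - x₀‖ ^ 2))).sub
    ((hasDerivAt_id t).const_mul ε).hasDerivWithinAt
  have := derivWithin_Icc_nonneg_of_isMaxOn_right ht₀.2 (gap_deriv.mono Icc_subset_Iic_self) hmax
  linarith

theorem isPenalizedContact_of_isMaxOn [CompleteSpace E]
    (h : IsNeumannSolution T Ω A b u ut Du D2u) (hB : IsBarrier M a Φ Φt Φz Φzz) (hΩ : IsOpen Ω)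
    (hconv : Convex ℝ Ω) (hx₀ : x₀ ∈ Ω) (hδ : 0 < δ) {t₀ t₁ : ℝ} (ht₀ : 0 ≤ t₀) (ht₁ : t₁ ≤ T)
    {p : (E × E) × ℝ} (hp : p ∈ (closure Ω ×ˢ closure Ω) ×ˢ Ioc t₀ t₁) (hne : p.1.1 ≠ p.1.2)
    (hmax : IsMaxOn (penalizedGap u Φ x₀ ε δ) ((closure Ω ×ˢ closure Ω) ×ˢ Icc t₀ t₁) p) :
    IsPenalizedContact ut Du D2u Φt Φz Φzz x₀ ε δ p := by
  obtain ⟨⟨x, y⟩, t⟩ := p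
  obtain ⟨hxy, ht⟩ := hp
  have htT : t ∈ Ioc 0 T := ⟨ht₀.trans_lt ht.1, ht.2.trans ht₁⟩
  have space_max : IsMaxOn (fun q => penalizedGap u Φ x₀ ε δ (q, t)) (closure Ω ×ˢ closure Ω)
      (x, y) := isMaxOn_iff.2 fun q hq => isMaxOn_iff.1 hmax (q, t) ⟨hq, Ioc_subset_Icc_self ht⟩
  have time_max : IsMaxOn (fun s => penalizedGap u Φ x₀ ε δ ((x, y), s)) (Icc t₀ t) t :=
    isMaxOn_iff.2 fun s hs => isMaxOn_iff.1 hmax ((x, y), s) ⟨hxy, hs.1, hs.2.trans ht.2⟩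
  obtain ⟨mem, right, left⟩ := h.mem_and_gradient_eq_of_isMaxOn_penalizedGap hB hΩ hconv hx₀ hδ
    hxy.1 hxy.2 hne htT space_max
  obtain ⟨hessian, hessian_normalize⟩ :=
    h.hessian_le_of_isMaxOn_penalizedGap hB hΩ mem.1 mem.2 hne htT space_max
  exact ⟨right, left, h.le_time_deriv_of_isMaxOn_penalizedGap hB ⟨ht₀, ht.1⟩ htT.2 mem.1 mem.2 hne
    time_max, hessian, hessian_normalize⟩

theorem continuousOn_twoPointGap (h : IsNeumannSolution T Ω A b u ut Du D2u)
    (hB : IsBarrier M a Φ Φt Φz Φzz) :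
    ContinuousOn (twoPointGap u Φ) ((closure Ω ×ˢ closure Ω) ×ˢ Ioc 0 T) :=
  ((continuousOn_two_point_sub h.continuousOn).mono
    (prod_mono_right Ioc_subset_Icc_self)).sub <|
      continuousOn_comp₂ hB.continuousOn (by fun_prop) (by fun_prop)
        fun p hp => ⟨norm_nonneg _, hp.2.1⟩

theorem eventually_exists_isPenalizedContact [CompleteSpace E]
    (h : IsNeumannSolution T Ω A b u ut Du D2u) (hB : IsBarrier M a Φ Φt Φz Φzz) (hΩ : IsOpen Ω)
    (hconv : Convex ℝ Ω) (hcomp : IsCompact (closure Ω)) (hx₀ : x₀ ∈ Ω) {t₀ t₁ c : ℝ}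
    (ht₀ : 0 < t₀) (ht₁ : t₁ ≤ T) (hc : 0 < c) (hε : 0 ≤ ε)
    (hinit : ∀ x ∈ closure Ω, ∀ y ∈ closure Ω, twoPointGap u Φ ((x, y), t₀) < c)
    {p₁ : (E × E) × ℝ} (hp₁ : p₁ ∈ (closure Ω ×ˢ closure Ω) ×ˢ Icc t₀ t₁)
    (hgap : c + ε * p₁.2 < twoPointGap u Φ p₁) :
    ∀ᶠ δ in 𝓝[>] 0, ∃ p ∈ (closure Ω ×ˢ closure Ω) ×ˢ Icc t₀ t₁, c ≤ twoPointGap u Φ p ∧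
      IsPenalizedContact ut Du D2u Φt Φz Φzz x₀ ε δ p := by
  set K := (closure Ω ×ˢ closure Ω) ×ˢ Icc t₀ t₁
  have gap_cont : ContinuousOn (twoPointGap u Φ) K := (h.continuousOn_twoPointGap hB).mono <|
    prod_mono_right fun s hs => ⟨ht₀.trans_le hs.1, hs.2.trans ht₁⟩
  have small : ∀ᶠ δ in 𝓝[>] (0 : ℝ), c < penalizedGap u Φ x₀ ε δ p₁ := by
    have : Continuous fun δ => penalizedGap u Φ x₀ ε δ p₁ := by
      unfold penalizedGap
      fun_prop
    refine nhdsWithin_le_nhds (this.continuousAt.eventually (lt_mem_nhds ?_))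
    simp only [penalizedGap, zero_mul, sub_zero]
    linarith
  filter_upwards [small, self_mem_nhdsWithin] with δ hδc hδ
  have penalized_cont : ContinuousOn (penalizedGap u Φ x₀ ε δ) K :=
    (gap_cont.sub (by fun_prop)).sub (by fun_prop)
  obtain ⟨p, hp, hmax⟩ := ((hcomp.prod hcomp).prod isCompact_Icc).exists_isMaxOn ⟨p₁, hp₁⟩
    penalized_cont
  have hcp : c ≤ twoPointGap u Φ p := by
    have le_max := isMaxOn_iff.1 hmax p₁ hp₁
    have space : 0 ≤ δ * (‖p.1.2 - x₀‖ ^ 2 + ‖p.1.1 - x₀‖ ^ 2) := mul_nonneg hδ.le (by positivity)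
    have time : 0 ≤ ε * p.2 := mul_nonneg hε (ht₀.le.trans hp.2.1)
    rw [penalizedGap.eq_def _ _ _ _ _ p] at le_max
    linarith
  have hne : p.1.1 ≠ p.1.2 :=
    hB.ne_of_pos_twoPointGap (ht₀.trans_le hp.2.1) (hc.trans_le hcp)
  have later : t₀ < p.2 := lt_of_le_of_ne hp.2.1 fun heq =>
    (hinit _ hp.1.1 _ hp.1.2).not_ge (heq ▸ hcp)
  exact ⟨p, hp, hcp, h.isPenalizedContact_of_isMaxOn hB hΩ hconv hx₀ hδ ht₀.le ht₁
    ⟨hp.1, later, hp.2.2⟩ hne hmax⟩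

theorem isClosed_gradient_eq (h : IsNeumannSolution T Ω A b u ut Du D2u)
    (hB : IsBarrier M a Φ Φt Φz Φzz) {C : Set ((E × E) × ℝ)} (hC : IsClosed C)
    (hCK : C ⊆ (closure Ω ×ˢ closure Ω) ×ˢ Ioc 0 T) (hne : ∀ p ∈ C, p.1.1 ≠ p.1.2) :
    IsClosed {q : ((E × E) × ℝ) × ℝ | q.1 ∈ C ∧
      Du q.1.1.2 q.1.2 = Φz ‖q.1.1.2 - q.1.1.1‖ q.1.2 • NormedSpace.normalize (q.1.1.2 - q.1.1.1) +
        (2 * q.2) • (q.1.1.2 - x₀) ∧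
      Du q.1.1.1 q.1.2 = Φz ‖q.1.1.2 - q.1.1.1‖ q.1.2 • NormedSpace.normalize (q.1.1.2 - q.1.1.1) -
        (2 * q.2) • (q.1.1.1 - x₀)} := by
  set S : Set (((E × E) × ℝ) × ℝ) := C ×ˢ univ
  have hS : IsClosed S := hC.prod isClosed_univ
  have barrier_cont := (continuousOn_comp₂ hB.continuousOn_deriv (by fun_prop) (by fun_prop)
    fun q (hq : q ∈ S) => ⟨norm_sub_pos_iff.2 (hne _ hq.1).symm, (hCK hq.1).2.1⟩).smul
    (continuousOn_normalize_sub.comp (by fun_prop : ContinuousOn (fun q => q.1.1) S)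
      fun q hq => hne _ hq.1)
  have closed_right := hS.isClosed_eq
    (continuousOn_comp₂ h.continuousOn_gradient (g := fun q => q.1.1.2) (k := fun q => q.1.2)
      (by fun_prop) (by fun_prop) fun q hq => ⟨(hCK hq.1).1.2, (hCK hq.1).2⟩)
    (barrier_cont.add (g := fun q => (2 * q.2) • (q.1.1.2 - x₀)) (by fun_prop))
  have closed_left := hS.isClosed_eq
    (continuousOn_comp₂ h.continuousOn_gradient (g := fun q => q.1.1.1) (k := fun q => q.1.2)
      (by fun_prop) (by fun_prop) fun q hq => ⟨(hCK hq.1).1.1, (hCK hq.1).2⟩)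
    (barrier_cont.sub (g := fun q => (2 * q.2) • (q.1.1.1 - x₀)) (by fun_prop))
  convert closed_right.inter closed_left using 1
  ext q
  exact ⟨fun hq => ⟨⟨⟨hq.1, mem_univ _⟩, hq.2.1⟩, ⟨hq.1, mem_univ _⟩, hq.2.2⟩,
    fun hq => ⟨hq.1.1.1, hq.1.2, hq.2.2⟩⟩

theorem isClosed_isPenalizedContact (h : IsNeumannSolution T Ω A b u ut Du D2u)
    (hB : IsBarrier M a Φ Φt Φz Φzz) {C : Set ((E × E) × ℝ)} (hC : IsClosed C)
    (hCK : C ⊆ (closure Ω ×ˢ closure Ω) ×ˢ Ioc 0 T) (hne : ∀ p ∈ C, p.1.1 ≠ p.1.2) :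
    IsClosed {q : ((E × E) × ℝ) × ℝ |
      q.1 ∈ C ∧ IsPenalizedContact ut Du D2u Φt Φz Φzz x₀ ε q.2 q.1} := by
  set S : Set (((E × E) × ℝ) × ℝ) := C ×ˢ univ
  have hS : IsClosed S := hC.prod isClosed_univ
  have dist : ∀ q ∈ S, (‖q.1.1.2 - q.1.1.1‖, q.1.2) ∈ Ioi (0 : ℝ) ×ˢ Ioi (0 : ℝ) := fun q hq =>
    ⟨norm_sub_pos_iff.2 (hne _ hq.1).symm, (hCK hq.1).2.1⟩
  have direction_cont := continuousOn_normalize_sub.comp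
    (by fun_prop : ContinuousOn (fun q => q.1.1) S) fun q hq => hne _ hq.1
  have hessian_cont := (continuousOn_two_point_sub h.continuousOn_hessian).comp
    continuousOn_fst (s := S) fun q hq => hCK hq.1
  have closed_time := hS.isClosed_le (continuousOn_const (c := ε)) <|
    ((continuousOn_two_point_sub h.continuousOn_time_deriv).comp continuousOn_fst
      fun q hq => hCK hq.1).sub
    (continuousOn_comp₂ hB.continuousOn_time_deriv (by fun_prop) (by fun_prop) dist)
  have closed_hessian (w : E) := hS.isClosed_le (g := fun q => 4 * q.2 * ‖w‖ ^ 2)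
    ((hessian_cont.clm_apply (continuousOn_const (c := w))).inner (𝕜 := ℝ)
      (continuousOn_const (c := w))) (by fun_prop)
  have closed_normalize := hS.isClosed_le
    ((hessian_cont.clm_apply direction_cont).inner (𝕜 := ℝ) direction_cont)
    (((continuousOn_comp₂ hB.continuousOn_second_deriv (by fun_prop) (by fun_prop)
      dist).const_mul 4).add (g := fun q => 4 * q.2) (by fun_prop))
  convert (((h.isClosed_gradient_eq hB hC hCK hne (x₀ := x₀)).inter closed_time).inter
    (isClosed_iInter closed_hessian)).inter closed_normalize using 1
  ext q
  constructor
  · rintro ⟨hq, hc⟩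
    have hqS : q ∈ S := ⟨hq, mem_univ _⟩
    exact ⟨⟨⟨⟨hq, hc.gradient_right, hc.gradient_left⟩, hqS, hc.time_deriv⟩,
      mem_iInter.2 fun w => ⟨hqS, hc.hessian w⟩⟩, hqS, hc.hessian_normalize⟩
  · rintro ⟨⟨⟨⟨hq, hr, hl⟩, _, ht⟩, hw⟩, _, hn⟩
    exact ⟨hq, hr, hl, ht, fun w => (mem_iInter.1 hw w).2, hn⟩

theorem exists_isPenalizedContact_zero [CompleteSpace E]
    (h : IsNeumannSolution T Ω A b u ut Du D2u) (hB : IsBarrier M a Φ Φt Φz Φzz) (hΩ : IsOpen Ω)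
    (hconv : Convex ℝ Ω) (hcomp : IsCompact (closure Ω)) (hx₀ : x₀ ∈ Ω) {t₀ t₁ c : ℝ}
    (ht₀ : 0 < t₀) (ht₁ : t₁ ≤ T) (hc : 0 < c) (hε : 0 ≤ ε)
    (hinit : ∀ x ∈ closure Ω, ∀ y ∈ closure Ω, twoPointGap u Φ ((x, y), t₀) < c)
    {p₁ : (E × E) × ℝ} (hp₁ : p₁ ∈ (closure Ω ×ˢ closure Ω) ×ˢ Icc t₀ t₁)
    (hgap : c + ε * p₁.2 < twoPointGap u Φ p₁) :
    ∃ p ∈ (closure Ω ×ˢ closure Ω) ×ˢ Ioc 0 T, p.1.1 ≠ p.1.2 ∧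
      IsPenalizedContact ut Du D2u Φt Φz Φzz x₀ ε 0 p := by
  set K := (closure Ω ×ˢ closure Ω) ×ˢ Icc t₀ t₁
  have hK : K ⊆ (closure Ω ×ˢ closure Ω) ×ˢ Ioc 0 T :=
    prod_mono_right fun s hs => ⟨ht₀.trans_le hs.1, hs.2.trans ht₁⟩
  set C := {p ∈ K | c ≤ twoPointGap u Φ p}
  have hCK : C ⊆ (closure Ω ×ˢ closure Ω) ×ˢ Ioc 0 T := fun p hp => hK hp.1
  have hKcomp : IsCompact K := (hcomp.prod hcomp).prod isCompact_Icc
  have hCclosed : IsClosed C := hKcomp.isClosed.isClosed_le continuousOn_const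
    ((h.continuousOn_twoPointGap hB).mono hK)
  have hne : ∀ p ∈ C, p.1.1 ≠ p.1.2 := fun p hp =>
    hB.ne_of_pos_twoPointGap (hCK hp).2.1 (hc.trans_le hp.2)
  have contacts : ∀ᶠ δ in 𝓝[>] (0 : ℝ), ∃ p ∈ C,
      IsPenalizedContact ut Du D2u Φt Φz Φzz x₀ ε δ p := by
    filter_upwards [h.eventually_exists_isPenalizedContact hB hΩ hconv hcomp hx₀ ht₀ ht₁ hc hε
      hinit hp₁ hgap] with δ ⟨p, hp, hcp, contact⟩
    exact ⟨p, ⟨hp, hcp⟩, contact⟩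
  obtain ⟨p, hp, contact⟩ := exists_mem_of_eventually_nhdsGT_exists
    (hKcomp.of_isClosed_subset hCclosed (sep_subset _ _))
    (h.isClosed_isPenalizedContact hB hCclosed hCK hne) contacts
  exact ⟨p, hCK hp, hne p hp, contact⟩

theorem not_isPenalizedContact_zero [FiniteDimensional ℝ E]
    (h : IsNeumannSolution T Ω A b u ut Du D2u) (hB : IsBarrier M a Φ Φt Φz Φzz)
    (hA : Continuous A) (hA_symm : ∀ p, (A p).IsSymmetric)
    (hb : ∀ t ∈ Ioc 0 T, Continuous fun p => b p t) (ha : ∀ r, 0 < r → 0 ≤ a r)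
    (hAa : ∀ p ≠ 0, ∀ v, a ‖p‖ * ⟪NormedSpace.normalize p, v⟫ ^ 2 ≤ ⟪A p v, v⟫)
    {p : (E × E) × ℝ} (hp : p ∈ (closure Ω ×ˢ closure Ω) ×ˢ Ioc 0 T) (hne : p.1.1 ≠ p.1.2)
    (hε : 0 < ε) : ¬IsPenalizedContact ut Du D2u Φt Φz Φzz x₀ ε 0 p := by
  obtain ⟨⟨x, y⟩, t⟩ := p
  obtain ⟨⟨hx, hy⟩, ht⟩ := hp
  rintro ⟨gradient_right, gradient_left, time_deriv, hessian, hessian_normalize⟩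
  simp only [mul_zero, zero_smul, add_zero, sub_zero, zero_mul]
    at hx hy ht hne gradient_right gradient_left time_deriv hessian hessian_normalize
  set e := NormedSpace.normalize (y - x)
  set g := Φz ‖y - x‖ t • e with hg
  have hr : 0 < ‖y - x‖ := norm_sub_pos_iff.2 (Ne.symm hne)
  have slope_pos : 0 < Φz ‖y - x‖ t := hB.deriv_pos _ hr t ht.1
  have he : ‖e‖ = 1 := NormedSpace.norm_normalize (sub_ne_zero.2 (Ne.symm hne))
  have norm_g : ‖g‖ = Φz ‖y - x‖ t := by rw [norm_smul_of_nonneg slope_pos.le, he, mul_one]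
  have normalize_g : NormedSpace.normalize g = e := by
    rw [hg, NormedSpace.normalize_smul_of_pos slope_pos, NormedSpace.normalize_normalize]
  have elliptic (v : E) : a (Φz ‖y - x‖ t) * ⟪e, v⟫ ^ 2 ≤ ⟪A g v, v⟫ := by
    simpa only [norm_g, normalize_g] using hAa g (norm_ne_zero_iff.1 (norm_g ▸ slope_pos.ne')) v
  have trace_le := trace_comp_le_of_mul_inner_sq_le
    (S := (D2u y t - D2u x t : E →L[ℝ] E)) (hA_symm g) elliptic hessian
  have trace_sub : LinearMap.trace ℝ E (A g ∘L (D2u y t - D2u x t)) = ut y t - ut x t := by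
    rw [h.pde_of_mem_closure hA ht (hb t ht) hx, h.pde_of_mem_closure hA ht (hb t ht) hy,
      gradient_right, gradient_left, ContinuousLinearMap.comp_sub,
      ContinuousLinearMap.toLinearMap_sub, map_sub]
    ring
  have := calc
    ε ≤ ut y t - ut x t - Φt ‖y - x‖ t := time_deriv
    _ = LinearMap.trace ℝ E (A g ∘L (D2u y t - D2u x t)) -
        4 * a (Φz ‖y - x‖ t) * Φzz ‖y - x‖ t := by rw [trace_sub, hB.pde _ hr t ht.1]
    _ ≤ a (Φz ‖y - x‖ t) * ⟪(D2u y t - D2u x t) e, e⟫ -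
        4 * a (Φz ‖y - x‖ t) * Φzz ‖y - x‖ t := sub_le_sub_right trace_le _
    _ = a (Φz ‖y - x‖ t) * (⟪(D2u y t - D2u x t) e, e⟫ - 4 * Φzz ‖y - x‖ t) := by ring
    _ ≤ 0 := mul_nonpos_of_nonneg_of_nonpos (ha _ slope_pos) (sub_nonpos.2 hessian_normalize)
  exact this.not_gt hε

theorem two_point_le [FiniteDimensional ℝ E] (h : IsNeumannSolution T Ω A b u ut Du D2u)
    (hB : IsBarrier M a Φ Φt Φz Φzz) (hΩ : IsOpen Ω) (hbdd : Bornology.IsBounded Ω)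
    (hconv : Convex ℝ Ω) (hA : Continuous A) (hA_symm : ∀ p, (A p).IsSymmetric)
    (hb : ∀ t ∈ Ioc 0 T, Continuous fun p => b p t) (ha : ∀ r, 0 < r → 0 ≤ a r)
    (hAa : ∀ p ≠ 0, ∀ v, a ‖p‖ * ⟪NormedSpace.normalize p, v⟫ ^ 2 ≤ ⟪A p v, v⟫)
    (hosc : ∀ x ∈ closure Ω, ∀ y ∈ closure Ω, u x 0 - u y 0 ≤ M) (hx : x ∈ closure Ω)
    (hy : y ∈ closure Ω) (ht : t ∈ Ioc 0 T) : u y t - u x t ≤ Φ ‖y - x‖ t := by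
  have := FiniteDimensional.complete ℝ E
  have := FiniteDimensional.proper ℝ E
  have hT : 0 < T := ht.1.trans_le ht.2
  have hcomp : IsCompact (closure Ω) := hbdd.isCompact_closure
  obtain ⟨x₀, hx₀⟩ := closure_nonempty_iff.1 ⟨x, hx⟩
  by_contra! gap_pos
  set m := twoPointGap u Φ ((x, y), t)
  have hm : 0 < m := sub_pos.2 gap_pos
  obtain ⟨t₀, hinit, ht₀⟩ := ((h.eventually_twoPointGap_lt hB hT hcomp hosc (half_pos hm)).and
    (Ioo_mem_nhdsGT ht.1)).exists
  have hgap : m / 2 + m / (4 * T) * t < m := by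
    have : m / (4 * T) * t ≤ m / (4 * T) * T := by gcongr; exact ht.2
    rw [show m / (4 * T) * T = m / 4 by field_simp] at this
    linarith
  obtain ⟨p, hp, hne, contact⟩ := h.exists_isPenalizedContact_zero hB hΩ hconv hcomp hx₀ ht₀.1
    ht.2 (half_pos hm) (ε := m / (4 * T)) (by positivity) hinit (p₁ := ((x, y), t))
    ⟨⟨hx, hy⟩, ht₀.2.le, le_rfl⟩ hgap
  exact h.not_isPenalizedContact_zero hB hA hA_symm hb ha hAa hp hne (by positivity) contact

end IsNeumannSolution

theorem neumann_modulus_estimate_higher_dim_general [FiniteDimensional ℝ E] {T M : ℝ}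
    (hM : 0 < M) {Ω : Set E} (hΩ : IsOpen Ω) (hbdd : Bornology.IsBounded Ω) (hconv : Convex ℝ Ω)
    {A : E → E →L[ℝ] E} (hA : Continuous A) (hA_symm : ∀ p, (A p).IsSymmetric) {b : E → ℝ → ℝ}
    (hb : ∀ t ∈ Ioc 0 T, Continuous fun p => b p t) {a : ℝ → ℝ} (ha : ∀ r, 0 < r → 0 ≤ a r)
    (hAa : ∀ p ≠ 0, ∀ v, a ‖p‖ * ⟪NormedSpace.normalize p, v⟫ ^ 2 ≤ ⟪A p v, v⟫)
    {u ut : E → ℝ → ℝ} {Du : E → ℝ → E} {D2u : E → ℝ → E →L[ℝ] E}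
    (hu : IsNeumannSolution T Ω A b u ut Du D2u)
    (hosc : ∀ x ∈ closure Ω, ∀ y ∈ closure Ω, u x 0 - u y 0 ≤ M) {φ φt φz φzz : ℝ → ℝ → ℝ}
    (hφ : IsBarrier 1 a φ φt φz φzz) :
    ∀ x ∈ closure Ω, ∀ y ∈ closure Ω, ∀ t ∈ Ioc 0 T,
      |u y t - u x t| ≤ M * φ (‖y - x‖ / M) (t / M ^ 2) := by
  intro x hx y hy t ht
  have two_point_le {x y : E} (hx : x ∈ closure Ω) (hy : y ∈ closure Ω) :=
    hu.two_point_le (hφ.rescale hM) hΩ hbdd hconv hA hA_symm hb ha hAa hosc hx hy ht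
  exact abs_sub_le_iff.2 ⟨two_point_le hx hy, norm_sub_rev x y ▸ two_point_le hy hx⟩

end NeumannProblem

/-! ### Coordinates -/

theorem sInf_div_sq_mul_sq_le {α : Type*} {Q : α → ℝ} (hQ : ∀ v, 0 ≤ Q v) (L : α → ℝ) (v : α) :
    sInf {r | ∃ w, L w ≠ 0 ∧ r = Q w / L w ^ 2} * L v ^ 2 ≤ Q v := by
  by_cases hv : L v = 0
  · simpa [hv] using hQ v
  · rw [← le_div_iff₀ (by positivity)]
    refine csInf_le ⟨0, ?_⟩ ⟨v, hv, rfl⟩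
    rintro r ⟨w, -, rfl⟩
    exact div_nonneg (hQ w) (sq_nonneg _)

section Coordinates

theorem preimage_ofLp_closure {ι : Type*} (Ω : Set (ι → ℝ)) :
    WithLp.ofLp (p := 2) ⁻¹' closure Ω = closure (WithLp.ofLp (p := 2) ⁻¹' Ω) :=
  (PiLp.homeomorph 2 _).preimage_closure Ω

theorem preimage_ofLp_frontier {ι : Type*} (Ω : Set (ι → ℝ)) :
    WithLp.ofLp (p := 2) ⁻¹' frontier Ω = frontier (WithLp.ofLp (p := 2) ⁻¹' Ω) :=
  (PiLp.homeomorph 2 _).preimage_frontier Ω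

theorem continuousOn_ofLp {ι Y : Type*} [TopologicalSpace Y] {f : (ι → ℝ) → ℝ → Y}
    {Ω : Set (ι → ℝ)} {I : Set ℝ}
    (hf : ContinuousOn (fun z : (ι → ℝ) × ℝ => f z.1 z.2) (closure Ω ×ˢ I)) :
    ContinuousOn (fun z : EuclideanSpace ℝ ι × ℝ => f z.1.ofLp z.2)
      (closure (WithLp.ofLp ⁻¹' Ω) ×ˢ I) := by
  rw [← preimage_ofLp_closure]
  exact continuousOn_comp₂ hf (by fun_prop) (by fun_prop) fun _ hz => hz

theorem hasFDerivAt_ofLp_of_hasDerivAt_single {ι F : Type*} [Finite ι] [DecidableEq ι]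
    [NormedAddCommGroup F] [NormedSpace ℝ F] {f : (ι → ℝ) → F}
    {f' : EuclideanSpace ℝ ι → EuclideanSpace ℝ ι →L[ℝ] F} {Ω : Set (ι → ℝ)} (hΩ : IsOpen Ω)
    (hf' : ContinuousOn f' (WithLp.ofLp ⁻¹' Ω))
    (h : ∀ x : EuclideanSpace ℝ ι, x.ofLp ∈ Ω → ∀ i,
      HasDerivAt (fun s : ℝ => f (x.ofLp + s • Pi.single i 1)) (f' x (EuclideanSpace.single i 1)) 0)
    {x : EuclideanSpace ℝ ι} (hx : x.ofLp ∈ Ω) :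
    HasFDerivAt (fun z : EuclideanSpace ℝ ι => f z.ofLp) (f' x) x := by
  cases nonempty_fintype ι
  refine hasFDerivAt_of_hasLineDerivAt_basis (EuclideanSpace.basisFun ι ℝ).toBasis
    (hΩ.preimage (PiLp.continuous_ofLp 2 _)) hf' (fun x hx i => ?_) hx
  simpa [HasLineDerivAt] using h x hx i

variable {ι : Type*} [Fintype ι] [DecidableEq ι]

theorem continuous_toEuclideanCLM : Continuous (Matrix.toEuclideanCLM (n := ι) (𝕜 := ℝ)) :=
  LinearMap.continuous_of_finiteDimensional
    (Matrix.toEuclideanCLM (n := ι) (𝕜 := ℝ)).toAlgEquiv.toLinearMap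

theorem inner_toEuclideanCLM_self (B : ι → ι → ℝ) (v : EuclideanSpace ℝ ι) :
    ⟪Matrix.toEuclideanCLM (𝕜 := ℝ) (.of B) v, v⟫ = ∑ i, ∑ j, v i * B i j * v j := by
  rw [real_inner_comm, Matrix.inner_toEuclideanCLM]
  simp [dotProduct, Matrix.mulVec, Finset.mul_sum, mul_assoc]

theorem trace_toEuclideanCLM (B : Matrix ι ι ℝ) :
    LinearMap.trace ℝ (EuclideanSpace ℝ ι) (Matrix.toEuclideanCLM (𝕜 := ℝ) B) = B.trace := by
  rw [Matrix.coe_toEuclideanCLM_eq_toEuclideanLin, Matrix.toEuclideanLin_eq_toLin_orthonormal,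
    Matrix.trace_toLin_eq]

theorem mul_inner_normalize_sq_le {a : ℝ → ℝ} {B : ι → ι → ℝ}
    (hB : ∀ v : ι → ℝ, 0 ≤ ∑ i, ∑ j, v i * B i j * v j) {p : EuclideanSpace ℝ ι} (hp : p ≠ 0)
    (hα : (∑ i, p i ^ 2) * sInf {r : ℝ | ∃ v : ι → ℝ, (∑ i, v i * p i) ≠ 0 ∧
      r = (∑ i, ∑ j, v i * B i j * v j) / (∑ i, v i * p i) ^ 2} =
        a (√(∑ i, p i ^ 2))) (v : EuclideanSpace ℝ ι) :
    a ‖p‖ * ⟪NormedSpace.normalize p, v⟫ ^ 2 ≤ ⟪Matrix.toEuclideanCLM (𝕜 := ℝ) (.of B) v, v⟫ := by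
  have inner_eq : ⟪p, v⟫ = ∑ i, v i * p i := by simp [PiLp.inner_apply]
  rw [EuclideanSpace.norm_eq]
  simp only [Real.norm_eq_abs, sq_abs]
  rw [← hα, ← EuclideanSpace.real_norm_sq_eq, NormedSpace.normalize, real_inner_smul_left,
    inner_toEuclideanCLM_self, inner_eq]
  refine le_of_eq_of_le ?_ (sInf_div_sq_mul_sq_le hB (fun v => ∑ i, v i * p i) v)
  field_simp

theorem hasFDerivAt_ofLp_of_hasDerivAt_partial {f : (ι → ℝ) → ℝ} {g : (ι → ℝ) → ι → ℝ}
    {Ω : Set (ι → ℝ)} (hΩ : IsOpen Ω) (hg : ContinuousOn g Ω)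
    (h : ∀ x ∈ Ω, ∀ i, HasDerivAt (fun s : ℝ => f (x + s • Pi.single i 1)) (g x i) 0)
    {x : EuclideanSpace ℝ ι} (hx : x.ofLp ∈ Ω) :
    HasFDerivAt (fun z : EuclideanSpace ℝ ι => f z.ofLp)
      (innerSL ℝ (WithLp.toLp 2 (g x.ofLp))) x := by
  refine hasFDerivAt_ofLp_of_hasDerivAt_single
    (f' := fun x => innerSL ℝ (WithLp.toLp 2 (g x.ofLp))) hΩ ?_ (fun x hx i => ?_) hx
  · exact ((innerSL ℝ).continuous.comp (PiLp.continuous_toLp 2 _)).comp_continuousOn <|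
      hg.comp (PiLp.continuous_ofLp 2 _).continuousOn fun _ hx => hx
  · simpa [EuclideanSpace.inner_single_right] using h x.ofLp hx i

theorem hasFDerivAt_toLp_ofLp_of_hasDerivAt_partial {g : (ι → ℝ) → ι → ℝ}
    {H : (ι → ℝ) → ι → ι → ℝ} {Ω : Set (ι → ℝ)} (hΩ : IsOpen Ω) (hH : ContinuousOn H Ω)
    (h : ∀ x ∈ Ω, ∀ i j, HasDerivAt (fun s : ℝ => g (x + s • Pi.single i 1) j) (H x i j) 0)
    {x : EuclideanSpace ℝ ι} (hx : x.ofLp ∈ Ω) :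
    HasFDerivAt (fun z : EuclideanSpace ℝ ι => WithLp.toLp 2 (g z.ofLp))
      (Matrix.toEuclideanCLM (𝕜 := ℝ) (.of (H x.ofLp))ᵀ) x := by
  refine hasFDerivAt_ofLp_of_hasDerivAt_single (f := fun x => WithLp.toLp 2 (g x))
    (f' := fun x => Matrix.toEuclideanCLM (𝕜 := ℝ) (.of (H x.ofLp))ᵀ) hΩ ?_ (fun x hx i => ?_) hx
  · exact (continuous_toEuclideanCLM.comp continuous_id.matrix_transpose).comp_continuousOn <|
      hH.comp (PiLp.continuous_ofLp 2 _).continuousOn fun _ hx => hx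
  · refine ((PiLp.continuousLinearEquiv 2 ℝ _).symm.hasFDerivAt.comp_hasDerivAt 0
      (hasDerivAt_pi.2 (h x.ofLp hx i))).congr_deriv ?_
    ext j
    simp

theorem isNeumannSolution_euclideanSpace {T : ℝ} {Ω : Set (ι → ℝ)} (hΩ : IsOpen Ω)
    {A : (ι → ℝ) → ι → ι → ℝ} {b : (ι → ℝ) → ℝ → ℝ} {u ut : (ι → ℝ) → ℝ → ℝ}
    {gu : (ι → ℝ) → ℝ → ι → ℝ} {hu : (ι → ℝ) → ℝ → ι → ι → ℝ}
    (hu_cont : ContinuousOn (fun z : (ι → ℝ) × ℝ => u z.1 z.2) (closure Ω ×ˢ Icc 0 T))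
    (hut : ∀ x ∈ Ω, ∀ t ∈ Ioc 0 T, HasDerivWithinAt (u x) (ut x t) (Ioc 0 T) t)
    (hgu : ∀ x ∈ Ω, ∀ t ∈ Ioc 0 T, ∀ i,
      HasDerivAt (fun s : ℝ => u (x + s • (Pi.single i 1 : ι → ℝ)) t) (gu x t i) 0)
    (hhu : ∀ x ∈ Ω, ∀ t ∈ Ioc 0 T, ∀ i j,
      HasDerivAt (fun s : ℝ => gu (x + s • (Pi.single i 1 : ι → ℝ)) t j) (hu x t i j) 0)
    (hut_cont : ContinuousOn (fun z : (ι → ℝ) × ℝ => ut z.1 z.2) (closure Ω ×ˢ Ioc 0 T))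
    (hgu_cont : ContinuousOn (fun z : (ι → ℝ) × ℝ => gu z.1 z.2) (closure Ω ×ˢ Ioc 0 T))
    (hhu_cont : ContinuousOn (fun z : (ι → ℝ) × ℝ => hu z.1 z.2) (closure Ω ×ˢ Ioc 0 T))
    (hpde : ∀ x ∈ Ω, ∀ t ∈ Ioc 0 T,
      ut x t = (∑ i, ∑ j, A (gu x t) i j * hu x t i j) + b (gu x t) t)
    (hneumann : ∀ x ∈ frontier Ω, ∀ t ∈ Ioc 0 T, ∀ ν : ι → ℝ,
      (∀ y ∈ Ω, (∑ i, ν i * (y i - x i)) ≤ 0) → (∑ i, gu x t i * ν i) = 0) :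
    IsNeumannSolution (E := EuclideanSpace ℝ ι) T (WithLp.ofLp ⁻¹' Ω)
      (fun p => Matrix.toEuclideanCLM (𝕜 := ℝ) (.of (A p.ofLp))) (fun p => b p.ofLp)
      (fun x => u x.ofLp) (fun x => ut x.ofLp) (fun x t => WithLp.toLp 2 (gu x.ofLp t))
      (fun x t => Matrix.toEuclideanCLM (𝕜 := ℝ) (Matrix.of (hu x.ofLp t))ᵀ) := by
  have slice {t : ℝ} (ht : t ∈ Ioc 0 T) : MapsTo (fun x : ι → ℝ => (x, t)) Ω
      (closure Ω ×ˢ Ioc 0 T) := fun x hx => ⟨subset_closure hx, ht⟩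
  constructor
  case continuousOn => exact continuousOn_ofLp hu_cont
  case time_deriv => exact fun x hx t ht => hut x hx t ht
  case gradient =>
    exact fun x hx t ht => hasFDerivAt_ofLp_of_hasDerivAt_partial (f := fun x => u x t)
      (g := fun x => gu x t) hΩ (hgu_cont.comp (by fun_prop) (slice ht))
      (fun x hx => hgu x hx t ht) hx
  case hessian =>
    exact fun x hx t ht => hasFDerivAt_toLp_ofLp_of_hasDerivAt_partial (g := fun x => gu x t)
      (H := fun x => hu x t) hΩ (hhu_cont.comp (by fun_prop) (slice ht))
      (fun x hx => hhu x hx t ht) hx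
  case continuousOn_time_deriv => exact continuousOn_ofLp hut_cont
  case continuousOn_gradient =>
    exact (PiLp.continuous_toLp 2 _).comp_continuousOn (continuousOn_ofLp hgu_cont)
  case continuousOn_hessian =>
    exact (continuous_toEuclideanCLM.comp continuous_id.matrix_transpose).comp_continuousOn
      (continuousOn_ofLp hhu_cont)
  case pde =>
    intro x hx t ht
    rw [← ContinuousLinearMap.mul_def, ← map_mul, trace_toEuclideanCLM, hpde x hx t ht]
    simp [Matrix.trace, Matrix.mul_apply]
  case neumann =>
    intro x hx t ht ν hν
    rw [← preimage_ofLp_frontier] at hx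
    have := hneumann x hx t ht ν fun y hy => by
      simpa [PiLp.inner_apply, mul_comm] using hν (WithLp.toLp 2 y) hy
    simpa [PiLp.inner_apply, mul_comm] using this

end Coordinates

/-- Modulus-of-continuity estimate for solutions of the Neumann
problem for `u_t = Σ A(Du)_{ij} D_{ij}u + b(Du,t)` on a convex domain, via a
barrier for the reduced equation `φ_t = 4 α̃(|φ_z|) φ_{zz}`. -/
theorem neumann_modulus_estimate_higher_dim
    (n : ℕ) (hn : 1 ≤ n) (T M : ℝ) (hT : 0 < T) (hM : 0 < M)
    (Ω : Set (Fin n → ℝ)) (hΩ_open : IsOpen Ω) (hΩ_bdd : Bornology.IsBounded Ω)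
    (hΩ_conv : Convex ℝ Ω)
    (A : (Fin n → ℝ) → Fin n → Fin n → ℝ)
    (hA_smooth : ∀ i j : Fin n, ContDiff ℝ (⊤ : ℕ∞) (fun p : Fin n → ℝ => A p i j))
    (hA_symm : ∀ p : Fin n → ℝ, ∀ i j, A p i j = A p j i)
    (hA_psd : ∀ p v : Fin n → ℝ, 0 ≤ ∑ i, ∑ j, v i * A p i j * v j)
    (b : (Fin n → ℝ) → ℝ → ℝ)
    (hb_cont : ContinuousOn (fun z : (Fin n → ℝ) × ℝ => b z.1 z.2)
      (Set.univ ×ˢ Set.Icc 0 T))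
    (αt : ℝ → ℝ) (hαt_pos : ∀ s : ℝ, 0 < s → 0 < αt s)
    (hα : ∀ p : Fin n → ℝ, p ≠ 0 →
      (∑ i, p i ^ 2) *
        sInf {r : ℝ | ∃ v : Fin n → ℝ, (∑ i, v i * p i) ≠ 0 ∧
          r = (∑ i, ∑ j, v i * A p i j * v j) / (∑ i, v i * p i) ^ 2}
        = αt (Real.sqrt (∑ i, p i ^ 2)))
    (u ut : (Fin n → ℝ) → ℝ → ℝ)
    (gu : (Fin n → ℝ) → ℝ → Fin n → ℝ)
    (hu : (Fin n → ℝ) → ℝ → Fin n → Fin n → ℝ)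
    (hu_cont : ContinuousOn (fun z : (Fin n → ℝ) × ℝ => u z.1 z.2)
      (closure Ω ×ˢ Set.Icc 0 T))
    (hut : ∀ x ∈ Ω, ∀ t ∈ Set.Ioc (0:ℝ) T,
      HasDerivWithinAt (fun s => u x s) (ut x t) (Set.Ioc 0 T) t)
    (hgu : ∀ x ∈ Ω, ∀ t ∈ Set.Ioc (0:ℝ) T, ∀ i,
      HasDerivAt (fun s : ℝ => u (x + s • (Pi.single i 1 : Fin n → ℝ)) t) (gu x t i) 0)
    (hhu : ∀ x ∈ Ω, ∀ t ∈ Set.Ioc (0:ℝ) T, ∀ i j,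
      HasDerivAt (fun s : ℝ => gu (x + s • (Pi.single i 1 : Fin n → ℝ)) t j) (hu x t i j) 0)
    (hut_cont : ContinuousOn (fun z : (Fin n → ℝ) × ℝ => ut z.1 z.2)
      (closure Ω ×ˢ Set.Ioc 0 T))
    (hgu_cont : ContinuousOn (fun z : (Fin n → ℝ) × ℝ => gu z.1 z.2)
      (closure Ω ×ˢ Set.Ioc 0 T))
    (hhu_cont : ContinuousOn (fun z : (Fin n → ℝ) × ℝ => hu z.1 z.2)
      (closure Ω ×ˢ Set.Ioc 0 T))
    (hpde : ∀ x ∈ Ω, ∀ t ∈ Set.Ioc (0:ℝ) T,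
      ut x t = (∑ i, ∑ j, A (gu x t) i j * hu x t i j) + b (gu x t) t)
    (hneumann : ∀ x ∈ frontier Ω, ∀ t ∈ Set.Ioc (0:ℝ) T, ∀ ν : Fin n → ℝ,
      (∀ y ∈ Ω, (∑ i, ν i * (y i - x i)) ≤ 0) → (∑ i, gu x t i * ν i) = 0)
    (hosc : ∀ x ∈ closure Ω, ∀ y ∈ closure Ω, u x 0 - u y 0 ≤ M)
    (φ φt φz φzz : ℝ → ℝ → ℝ)
    (hφ_cont : ContinuousOn (fun z : ℝ × ℝ => φ z.1 z.2) (Set.Ici 0 ×ˢ Set.Ioi 0))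
    (hφt : ∀ z ∈ Set.Ioi (0:ℝ), ∀ t ∈ Set.Ioi (0:ℝ), HasDerivAt (fun s => φ z s) (φt z t) t)
    (hφz : ∀ z ∈ Set.Ioi (0:ℝ), ∀ t ∈ Set.Ioi (0:ℝ), HasDerivAt (fun w => φ w t) (φz z t) z)
    (hφzz : ∀ z ∈ Set.Ioi (0:ℝ), ∀ t ∈ Set.Ioi (0:ℝ), HasDerivAt (fun w => φz w t) (φzz z t) z)
    (hφt_cont : ContinuousOn (fun z : ℝ × ℝ => φt z.1 z.2) (Set.Ioi 0 ×ˢ Set.Ioi 0))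
    (hφz_cont : ContinuousOn (fun z : ℝ × ℝ => φz z.1 z.2) (Set.Ioi 0 ×ˢ Set.Ioi 0))
    (hφzz_cont : ContinuousOn (fun z : ℝ × ℝ => φzz z.1 z.2) (Set.Ioi 0 ×ˢ Set.Ioi 0))
    (hφz_pos : ∀ z ∈ Set.Ioi (0:ℝ), ∀ t ∈ Set.Ioi (0:ℝ), 0 < φz z t)
    (hφpde : ∀ z ∈ Set.Ioi (0:ℝ), ∀ t ∈ Set.Ioi (0:ℝ),
      φt z t = 4 * αt |φz z t| * φzz z t)
    (hbc1 : ∀ z : ℝ, 0 < z →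
      Filter.Tendsto (fun t => φ z t) (nhdsWithin 0 (Set.Ioi 0)) (nhds 1))
    (hbc2 : ∀ t : ℝ, 0 < t → φ 0 t = 0)
    (hbc3 : ∀ t : ℝ, 0 < t →
      Filter.Tendsto (fun z => φ z t) Filter.atTop (nhds 1)) :
    ∀ x ∈ closure Ω, ∀ y ∈ closure Ω, ∀ t ∈ Set.Ioc (0:ℝ) T,
      |u y t - u x t| ≤
        M * φ (Real.sqrt (∑ i, (y i - x i) ^ 2) / M) (t / M ^ 2) := by
  have barrier : IsBarrier 1 αt φ φt φz φzz := ⟨hφ_cont, hφt, hφz, hφzz, hφt_cont, hφz_cont,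
    hφzz_cont, hφz_pos, fun z hz t ht => by rw [hφpde z hz t ht, abs_of_pos (hφz_pos z hz t ht)],
    hbc1, hbc2⟩
  have solution := isNeumannSolution_euclideanSpace hΩ_open hu_cont hut hgu hhu hut_cont hgu_cont
    hhu_cont hpde hneumann
  have A_cont := continuous_toEuclideanCLM.comp <| continuous_matrix fun i j =>
    (hA_smooth i j).continuous.comp (PiLp.continuous_ofLp 2 _)
  have A_symm (p : Fin n → ℝ) : (Matrix.toEuclideanLin (.of (A p))).IsSymmetric :=
    Matrix.isSymmetric_toEuclideanLin_iff.2 <| Matrix.ext fun i j => hA_symm p j i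
  have b_cont (t : ℝ) (ht : t ∈ Ioc 0 T) :
      Continuous fun p : EuclideanSpace ℝ (Fin n) => b p.ofLp t :=
    hb_cont.comp_continuous (by fun_prop : Continuous fun p => (WithLp.ofLp p, t))
      fun _ => ⟨mem_univ _, Ioc_subset_Icc_self ht⟩
  have estimate := neumann_modulus_estimate_higher_dim_general hM
    (hΩ_open.preimage (PiLp.continuous_ofLp 2 _))
    ((PiLp.antilipschitzWith_ofLp 2 _).isBounded_preimage hΩ_bdd)
    (hΩ_conv.linear_preimage (WithLp.linearEquiv 2 ℝ _).toLinearMap) A_cont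
    (fun p => A_symm p.ofLp) b_cont (fun r hr => (hαt_pos r hr).le)
    (fun p hp => mul_inner_normalize_sq_le (hA_psd p.ofLp) hp (hα p.ofLp (by simpa using hp)))
    solution (preimage_ofLp_closure Ω ▸ fun _ hx _ hy => hosc _ hx _ hy) barrier
  intro x hx y hy t ht
  simpa [EuclideanSpace.norm_eq] using estimate (.toLp 2 x) (preimage_ofLp_closure Ω ▸ hx)
    (.toLp 2 y) (preimage_ofLp_closure Ω ▸ hy) t ht
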